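/- arXiv:1011.1115 — 3 statements merged into one kernel-verified Lean document; each statement's English description precedes it below -/
import Mathlib

section
/- Let (X,f) be a topological dynamical system, μ an f-invariant ergodic Borel probability measure, Q a finite measurable partition of X, and g = g(n,Q) any function with g(n,Q) ≤ g(n+1,Q) and g(n,Q)/n → 0. Then for μ-almost every x, h_μ(f,Q) = lim_{n→∞} (1/n) log R_n(g,x,Q), where R_n(g,x,Q) is the first return time of x to the mistake partition element Q_g^{(n)}(x). -/
open Filter MeasureTheory Set Topology
open scoped ENNReal

/-- A *mistake function* `g : ℕ × (0,∞) → ℕ`: nondecreasing in `n` and sublinear in `n`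
for every scale `ε > 0`. -/
structure IsMistakeFunction (g : ℕ → ℝ → ℕ) : Prop where
  mono : ∀ ε : ℝ, 0 < ε → ∀ n : ℕ, g n ε ≤ g (n + 1) ε
  sublinear : ∀ ε : ℝ, 0 < ε → Tendsto (fun n : ℕ => (g n ε : ℝ) / n) atTop (nhds 0)

/-- The mistake dynamical ball `B_n(g; x, ε)`. -/
def mistakeBall {X : Type*} [PseudoMetricSpace X] (f : X → X) (g : ℕ → ℝ → ℕ)
    (n : ℕ) (x : X) (ε : ℝ) : Set X :=
  {y | ∃ Λ : Finset ℕ, Λ ⊆ Finset.range n ∧ n - g n ε ≤ Λ.card ∧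
    ∀ i ∈ Λ, dist (f^[i] y) (f^[i] x) < ε}

/-- First return time `R_n(g; x, ε)` to the mistake dynamical ball. -/
noncomputable def mistakeReturn {X : Type*} [PseudoMetricSpace X] (f : X → X)
    (g : ℕ → ℝ → ℕ) (n : ℕ) (x : X) (ε : ℝ) : ℕ :=
  sInf {k : ℕ | 1 ≤ k ∧ f^[k] x ∈ mistakeBall f g n x ε}

/-- Minimal return time `S_n(g; x, ε)` of the mistake dynamical ball to itself. -/
noncomputable def mistakeMinReturn {X : Type*} [PseudoMetricSpace X] (f : X → X)
    (g : ℕ → ℝ → ℕ) (n : ℕ) (x : X) (ε : ℝ) : ℕ :=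
  sInf {k : ℕ | 1 ≤ k ∧
    (f^[k] ⁻¹' (mistakeBall f g n x ε) ∩ mistakeBall f g n x ε).Nonempty}

/-- `g`-almost specification at scale `ε`. -/
def AlmostSpecAt {X : Type*} [PseudoMetricSpace X] (f : X → X) (g : ℕ → ℝ → ℕ)
    (ε : ℝ) : Prop :=
  ∃ N : ℕ, 0 < N ∧ ∀ x y : X, ∀ n m : ℕ, N ≤ n → N ≤ m →
    (mistakeBall f g m y ε ∩ f^[m] ⁻¹' mistakeBall f g n x ε).Nonempty

/-- The `g`-almost specification property. -/
def AlmostSpec {X : Type*} [PseudoMetricSpace X] (f : X → X) (g : ℕ → ℝ → ℕ) : Prop :=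
  ∃ ε : ℝ, 0 < ε ∧ AlmostSpecAt f g ε

/-- Static entropy `H_μ(Q^{(n)})` of the refined partition `Q^{(n)} = ⋁_{i<n} f⁻ⁱQ`,
where the finite partition `Q` is encoded by a map `P : X → Fin m`. -/
noncomputable def refinedEntropy {X : Type*} [MeasurableSpace X] (μ : Measure X)
    (f : X → X) {m : ℕ} (P : X → Fin m) (n : ℕ) : ℝ :=
  ∑ a : Fin n → Fin m, Real.negMulLog (μ {x | ∀ i : Fin n, P (f^[(i : ℕ)] x) = a i}).toReal

/-- The measure-theoretic entropy `h_μ(f, Q)` of `μ` relative to the finite partition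
encoded by `P : X → Fin m`, defined (via subadditivity) as `inf_n H_μ(Q^{(n)})/n`. -/
noncomputable def partitionEntropy {X : Type*} [MeasurableSpace X] (μ : Measure X)
    (f : X → X) {m : ℕ} (P : X → Fin m) : ℝ :=
  ⨅ n : ℕ, refinedEntropy μ f P (n + 1) / (n + 1)

/-- The Kolmogorov–Sinai entropy `h_μ(f)`: the supremum, over all finite measurable
partitions, of the entropy relative to the partition. -/
noncomputable def ksEntropy {X : Type*} [MeasurableSpace X] (μ : Measure X)
    (f : X → X) : ℝ≥0∞ :=
  ⨆ (m : ℕ) (P : X → Fin m) (_ : Measurable P), ENNReal.ofReal (partitionEntropy μ f P)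

/-- The mistake "partition element" `Q_g^{(n)}(x) = ⋃_{Λ ∈ I(g;n,Q)} Q^{(n)}_Λ(x)`, for a
finite partition encoded by `P : X → Fin m` and a mistake function `g : ℕ → ℕ` for the
partition. -/
def mistakeCylinder {X : Type*} (f : X → X) {m : ℕ} (P : X → Fin m) (g : ℕ → ℕ)
    (n : ℕ) (x : X) : Set X :=
  {y | ∃ Λ : Finset ℕ, Λ ⊆ Finset.range n ∧ n - g n ≤ Λ.card ∧
    ∀ j ∈ Λ, P (f^[j] y) = P (f^[j] x)}

/-- First return time `R_n(g, x, Q)` of `x` to the mistake partition element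
`Q_g^{(n)}(x)`. -/
noncomputable def cylReturn {X : Type*} (f : X → X) {m : ℕ} (P : X → Fin m) (g : ℕ → ℕ)
    (n : ℕ) (x : X) : ℕ :=
  sInf {k : ℕ | 1 ≤ k ∧ f^[k] x ∈ mistakeCylinder f P g n x}

/-- Minimal return time `S_n(g, x, Q)` of the set `Q_g^{(n)}(x)` to itself. -/
noncomputable def cylMinReturn {X : Type*} (f : X → X) {m : ℕ} (P : X → Fin m) (g : ℕ → ℕ)
    (n : ℕ) (x : X) : ℕ :=
  sInf {k : ℕ | 1 ≤ k ∧
    (f^[k] ⁻¹' (mistakeCylinder f P g n x) ∩ mistakeCylinder f P g n x).Nonempty}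

/-!
Upper bound. By invariance, among the points whose itinerary cylinder of length `n` has measure at
least `exp (-n b)`, those not returning to it before time `exp (n c)` have measure at most
`exp (n (b - c))`: within one cylinder their first `exp (n c)` preimages are pairwise disjoint.
Cylinders are eventually this large for every `b > h_μ(f, Q)`, as a comparison of `μ` with an
order-`k` Markov approximation shows: the weights of the approximation sum to at most one, so they
rarely exceed the measures of cylinders by an exponential factor, and along orbits they decay at the
rate `H(Q^(k+1)) - H(Q^(k))` by the ergodic theorem, applied to minus the logarithm of a conditional
probability.

Lower bound. If `x` agrees with `f^[k] x` on `[0, n)` off a mistake pattern `Γ`, then its first `n`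
symbols can be read off from right to left once the next `J ≥ k` symbols and those at `Γ` are known.
Given the next `J` symbols there are thus at most `m ^ #Γ` such prefixes, each of conditional
probability at most `exp (-n b)` with `b < h_μ(f, Q)`. This bound holds simultaneously for all
`J ≥ n`, because the information of a symbol given its future converges (martingale convergence),
so that its infimum over all long futures still has mean above `b`. Sublinearly many mistakes
contribute only a subexponential factor, and the Borel–Cantelli lemma concludes.
-/

section Limits

theorem ae_tendsto_of_forall_ae_eventually {Ω ι α : Type*} [MeasurableSpace Ω] {μ : Measure Ω}
    [LinearOrder α] [TopologicalSpace α] [OrderTopology α] [FirstCountableTopology α]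
    [NoMinOrder α] [NoMaxOrder α] {l : Filter ι} {u : ι → Ω → α} {a : α}
    (hlower : ∀ c < a, ∀ᵐ x ∂μ, ∀ᶠ i in l, c < u i x)
    (hupper : ∀ c > a, ∀ᵐ x ∂μ, ∀ᶠ i in l, u i x < c) :
    ∀ᵐ x ∂μ, Tendsto (fun i => u i x) l (𝓝 a) := by
  obtain ⟨s, hs⟩ := (𝓝 a).exists_antitone_basis
  have hmem (n : ℕ) : ∀ᵐ x ∂μ, ∀ᶠ i in l, u i x ∈ s n := by
    obtain ⟨b, c, ha, hbc⟩ := mem_nhds_iff_exists_Ioo_subset.1 (hs.1.mem_of_mem (i := n) trivial)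
    filter_upwards [hlower b ha.1, hupper c ha.2] with x hb hc
    filter_upwards [hb, hc] with i hbi hci using hbc ⟨hbi, hci⟩
  filter_upwards [ae_all_iff.2 hmem] with x hx
  exact hs.1.tendsto_right_iff.2 fun n _ => hx n

theorem ae_eventually_notMem_of_measureReal_le {Ω : Type*} [MeasurableSpace Ω] {μ : Measure Ω}
    [IsFiniteMeasure μ] {s : ℕ → Set Ω} {a : ℕ → ℝ} (ha : Summable a)
    (hs : ∀ᶠ n in atTop, μ.real (s n) ≤ a n) : ∀ᵐ x ∂μ, ∀ᶠ n in atTop, x ∉ s n := by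
  have hsum : Summable fun n => μ.real (s n) :=
    ha.of_norm_bounded_eventually_nat (hs.mono fun n hn => by
      rwa [Real.norm_of_nonneg measureReal_nonneg])
  refine ae_eventually_notMem ?_
  simpa only [ofReal_measureReal (measure_ne_top μ _)] using hsum.tsum_ofReal_ne_top

theorem tendsto_iInf_add_of_tendsto {u : ℕ → ℝ} {l : ℝ} (hbdd : BddBelow (range u))
    (hu : Tendsto u atTop (𝓝 l)) : Tendsto (fun N => ⨅ k, u (N + k)) atTop (𝓝 l) := by
  have hbdd' (N : ℕ) : BddBelow (range fun k => u (N + k)) :=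
    hbdd.mono (range_comp_subset_range (N + ·) u)
  refine tendsto_order.2 ⟨fun a ha => ?_, fun a ha => ?_⟩
  · obtain ⟨b, hab, hbl⟩ := exists_between ha
    obtain ⟨N₀, hN₀⟩ := eventually_atTop.1 (hu.eventually_const_lt hbl)
    filter_upwards [eventually_ge_atTop N₀] with N hN
    exact hab.trans_le (le_ciInf fun k => (hN₀ _ (by lia)).le)
  · filter_upwards [hu.eventually_lt_const ha] with N hN
    exact (ciInf_le (hbdd' N) 0).trans_lt hN

theorem tendsto_integral_iInf_add {Ω : Type*} [MeasurableSpace Ω] {μ : Measure Ω}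
    [IsFiniteMeasure μ] {u : ℕ → Ω → ℝ} {v : Ω → ℝ} {M : ℝ} (hum : ∀ n, Measurable (u n))
    (hbound : ∀ n x, |u n x| ≤ M) (hu : ∀ᵐ x ∂μ, Tendsto (fun n => u n x) atTop (𝓝 (v x))) :
    Tendsto (fun N => ∫ x, ⨅ k, u (N + k) x ∂μ) atTop (𝓝 (∫ x, v x ∂μ)) := by
  have hbdd (N : ℕ) (x : Ω) : BddBelow (range fun k => u (N + k) x) :=
    ⟨-M, forall_mem_range.2 fun k => (abs_le.1 (hbound _ x)).1⟩
  have hmeas (N : ℕ) : Measurable fun x => ⨅ k, u (N + k) x := .iInf fun k => hum (N + k)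
  refine tendsto_integral_of_dominated_convergence (fun _ => M)
    (fun N => (hmeas N).aestronglyMeasurable) (integrable_const M)
    (fun N => .of_forall fun x => ?_) ?_
  · exact abs_le.2 ⟨le_ciInf fun k => (abs_le.1 (hbound _ x)).1,
      (ciInf_le (hbdd N x) 0).trans (abs_le.1 (hbound _ x)).2⟩
  · filter_upwards [hu] with x hx
    exact tendsto_iInf_add_of_tendsto (u := fun n => u n x) (by simpa using hbdd 0 x) hx

end Limits

section ErgodicTheorem

variable {X : Type*} {f : X → X} {φ : X → ℝ}

theorem partialSups_birkhoffSum_succ (n : ℕ) (x : X) :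
    partialSups (birkhoffSum f φ) (n + 1) x =
      max 0 (φ x + partialSups (birkhoffSum f φ) n (f x)) := by
  induction n generalizing x with
  | zero => rw [partialSups_add_one]; simp [max_comm]
  | succ n ih =>
    rw [partialSups_add_one, Pi.sup_apply, ih, partialSups_add_one _ n, Pi.sup_apply,
      birkhoffSum_succ', max_assoc, max_add_add_left]

theorem birkhoffSum_le_partialSups {m n : ℕ} (hmn : m ≤ n) (x : X) :
    birkhoffSum f φ m x ≤ partialSups (birkhoffSum f φ) n x :=
  le_partialSups_of_le (birkhoffSum f φ) hmn x

theorem bddAbove_range_birkhoffSum_apply_iff (x : X) :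
    BddAbove (range fun n => birkhoffSum f φ n (f x)) ↔
      BddAbove (range fun n => birkhoffSum f φ n x) := by
  simp only [bddAbove_def, forall_mem_range]
  constructor
  · rintro ⟨B, hB⟩
    refine ⟨max 0 (φ x + B), fun n => ?_⟩
    cases n with
    | zero => simp
    | succ n =>
      rw [birkhoffSum_succ']
      exact le_max_of_le_right (by linarith [hB n])
  · rintro ⟨B, hB⟩
    refine ⟨B - φ x, fun n => ?_⟩
    have hsucc := hB (n + 1)
    rw [birkhoffSum_succ'] at hsucc
    linarith

variable [MeasurableSpace X] {μ : Measure X}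

theorem integral_comp_eq_of_measurePreserving (hf : MeasurePreserving f μ μ)
    (hφ : AEStronglyMeasurable φ μ) : ∫ x, φ (f x) ∂μ = ∫ x, φ x ∂μ := by
  conv_rhs => rw [← hf.map_eq]
  exact (integral_map hf.aemeasurable (hf.map_eq.symm ▸ hφ)).symm

theorem integrable_birkhoffSum (hf : MeasurePreserving f μ μ) (hφ : Integrable φ μ) (n : ℕ) :
    Integrable (birkhoffSum f φ n) μ :=
  integrable_finsetSum _ fun k _ => (hf.iterate k).integrable_comp_of_integrable hφ

theorem integrable_partialSups_birkhoffSum (hf : MeasurePreserving f μ μ) (hφ : Integrable φ μ)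
    (n : ℕ) : Integrable (partialSups (birkhoffSum f φ) n) μ := by
  induction n with
  | zero => exact integrable_birkhoffSum hf hφ 0
  | succ n ih =>
    rw [partialSups_add_one]
    exact ih.sup (integrable_birkhoffSum hf hφ _)

theorem integral_partialSups_birkhoffSum_sub_nonneg (hf : MeasurePreserving f μ μ)
    (hφ : Integrable φ μ) (n : ℕ) :
    0 ≤ ∫ x, (partialSups (birkhoffSum f φ) (n + 1) x -
      partialSups (birkhoffSum f φ) n (f x)) ∂μ := by
  have hint := integrable_partialSups_birkhoffSum hf hφ
  have hcomp : Integrable (fun x => partialSups (birkhoffSum f φ) n (f x)) μ :=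
    hf.integrable_comp_of_integrable (hint n)
  rw [integral_sub (hint _) hcomp,
    integral_comp_eq_of_measurePreserving hf (hint n).aestronglyMeasurable, sub_nonneg]
  exact integral_mono (hint n) (hint _) fun x =>
    (partialSups (birkhoffSum f φ)).monotone n.le_succ x

theorem integral_nonneg_of_ae_not_bddAbove_birkhoffSum (hf : MeasurePreserving f μ μ)
    (hφ : Integrable φ μ)
    (hunbdd : ∀ᵐ x ∂μ, ¬ BddAbove (range fun n => birkhoffSum f φ n x)) :
    0 ≤ ∫ x, φ x ∂μ := by
  set D : ℕ → X → ℝ := fun n x =>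
    partialSups (birkhoffSum f φ) (n + 1) x - partialSups (birkhoffSum f φ) n (f x)
  have hD (n : ℕ) (x : X) : D n x = max (-partialSups (birkhoffSum f φ) n (f x)) (φ x) := by
    simp only [D, partialSups_birkhoffSum_succ, ← max_sub_sub_right, zero_sub, add_sub_cancel_right]
  have hint := integrable_partialSups_birkhoffSum hf hφ
  refine ge_of_tendsto' (tendsto_integral_of_dominated_convergence (F := D) (fun x => |φ x|)
    (fun n => ((hint _).sub (hf.integrable_comp_of_integrable (hint n))).aestronglyMeasurable)
    hφ.abs (fun n => .of_forall fun x => ?_) ?_)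
    (integral_partialSups_birkhoffSum_sub_nonneg hf hφ)
  · have h0 : 0 ≤ partialSups (birkhoffSum f φ) n (f x) := by
      simpa using birkhoffSum_le_partialSups (f := f) (φ := φ) n.zero_le (f x)
    rw [hD, Real.norm_eq_abs]
    exact abs_le.2 ⟨le_max_of_le_right (neg_abs_le _),
      max_le ((neg_nonpos.2 h0).trans (abs_nonneg _)) (le_abs_self _)⟩
  · filter_upwards [hunbdd] with x hx
    rw [← bddAbove_range_birkhoffSum_apply_iff, not_bddAbove_iff] at hx
    obtain ⟨-, ⟨n₀, rfl⟩, hn₀⟩ := hx (-φ x)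
    refine tendsto_const_nhds.congr' ?_
    filter_upwards [eventually_ge_atTop n₀] with n hn
    rw [hD, max_eq_right]
    linarith [birkhoffSum_le_partialSups (f := f) (φ := φ) hn (f x)]

theorem ae_bddAbove_birkhoffSum_of_integral_neg (hf : Ergodic f μ) (hφ : Integrable φ μ)
    (hneg : ∫ x, φ x ∂μ < 0) : ∀ᵐ x ∂μ, BddAbove (range fun n => birkhoffSum f φ n x) := by
  have hmeas : NullMeasurableSet {x | BddAbove (range fun n => birkhoffSum f φ n x)} μ :=
    measurableSet_bddAbove_range (δ := NullMeasurableSpace X μ) fun n =>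
      (integrable_birkhoffSum hf.toMeasurePreserving hφ n).aestronglyMeasurable.aemeasurable
        |>.nullMeasurable
  refine (hf.quasiErgodic.ae_mem_or_ae_notMem₀ hmeas
    (.of_eq <| Set.ext bddAbove_range_birkhoffSum_apply_iff)).resolve_right fun h => ?_
  exact hneg.not_ge (integral_nonneg_of_ae_not_bddAbove_birkhoffSum hf.toMeasurePreserving hφ h)

variable [IsProbabilityMeasure μ]

theorem ae_eventually_birkhoffAverage_lt (hf : Ergodic f μ) (hφ : Integrable φ μ) {c : ℝ}
    (hc : ∫ x, φ x ∂μ < c) : ∀ᵐ x ∂μ, ∀ᶠ n in atTop, birkhoffAverage ℝ f φ n x < c := by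
  obtain ⟨b, hb, hbc⟩ := exists_between hc
  have hneg : ∫ x, (φ x - b) ∂μ < 0 := by
    simpa [integral_sub hφ (integrable_const b)] using hb
  filter_upwards [ae_bddAbove_birkhoffSum_of_integral_neg hf (hφ.sub (integrable_const b)) hneg]
    with x ⟨B, hB⟩
  have hlim : Tendsto (fun n : ℕ => b + B / n) atTop (𝓝 b) := by
    simpa using tendsto_const_nhds.add (tendsto_const_div_atTop_nhds_zero_nat B)
  filter_upwards [hlim.eventually_lt_const hbc, eventually_gt_atTop 0] with n hn hn0
  have hsum : birkhoffSum f φ n x - n * b ≤ B := by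
    simpa [birkhoffSum, Finset.sum_sub_distrib] using hB ⟨n, rfl⟩
  refine lt_of_le_of_lt ?_ hn
  rw [birkhoffAverage, smul_eq_mul, inv_mul_le_iff₀ (by positivity)]
  field_simp
  linarith

theorem ae_tendsto_birkhoffAverage (hf : Ergodic f μ) (hφ : Integrable φ μ) :
    ∀ᵐ x ∂μ, Tendsto (fun n => birkhoffAverage ℝ f φ n x) atTop (𝓝 (∫ x, φ x ∂μ)) := by
  refine ae_tendsto_of_forall_ae_eventually (fun c hc => ?_)
    fun c hc => ae_eventually_birkhoffAverage_lt hf hφ hc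
  have hneg : ∫ x, (-φ) x ∂μ < -c := by simpa [integral_neg] using hc
  filter_upwards [ae_eventually_birkhoffAverage_lt hf hφ.neg hneg] with x hx
  filter_upwards [hx] with n hn
  simpa [birkhoffAverage_neg] using hn

end ErgodicTheorem

section FiniteCodes

variable {Ω β : Type*} [MeasurableSpace Ω] {μ : Measure Ω}

theorem measureReal_le_sum_of_inter_fiber_le [Fintype β] (c : Ω → β) {s : Set Ω} {w : β → ℝ}
    (hw : ∀ b, μ.real (s ∩ c ⁻¹' {b}) ≤ w b) : μ.real s ≤ ∑ b, w b := by
  have hs : s = ⋃ b ∈ Finset.univ, s ∩ c ⁻¹' {b} := by ext; simp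
  calc μ.real s = μ.real (⋃ b ∈ Finset.univ, s ∩ c ⁻¹' {b}) := by rw [← hs]
    _ ≤ ∑ b, μ.real (s ∩ c ⁻¹' {b}) := measureReal_biUnion_finset_le _ _
    _ ≤ ∑ b, w b := Finset.sum_le_sum fun b _ => hw b

theorem ae_measureReal_fiber_pos [Finite β] [IsFiniteMeasure μ] (c : Ω → β) :
    ∀ᵐ x ∂μ, 0 < μ.real (c ⁻¹' {c x}) := by
  have hfiber (b : β) : ∀ᵐ x ∂μ, c x = b → 0 < μ.real (c ⁻¹' {b}) := by
    rcases (measureReal_nonneg (μ := μ) (s := c ⁻¹' {b})).eq_or_lt with h0 | hpos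
    · have hnull : μ (c ⁻¹' {b}) = 0 := (measureReal_eq_zero_iff (by finiteness)).1 h0.symm
      filter_upwards [measure_eq_zero_iff_ae_notMem.1 hnull] with x hx hxb using absurd hxb hx
    · exact .of_forall fun _ _ => hpos
  filter_upwards [ae_all_iff.2 hfiber] with x hx using hx _ rfl

theorem ae_eventually_exp_mul_weight_le_measureReal_fiber [IsFiniteMeasure μ] {β : ℕ → Type*}
    [∀ n, Fintype (β n)] (c : ∀ n, Ω → β n) {W : ∀ n, β n → ℝ} (hW : ∀ n b, 0 ≤ W n b)
    (hsum : ∀ n, ∑ b, W n b ≤ 1) {δ : ℝ} (hδ : 0 < δ) :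
    ∀ᵐ x ∂μ, ∀ᶠ n : ℕ in atTop,
      Real.exp (n * -δ) * W n (c n x) ≤ μ.real (c n ⁻¹' {c n x}) := by
  refine (ae_eventually_notMem_of_measureReal_le (s := fun n =>
    {x | μ.real (c n ⁻¹' {c n x}) < Real.exp (n * -δ) * W n (c n x)})
    (Real.summable_exp_nat_mul_iff.2 (neg_neg_iff_pos.2 hδ)) (.of_forall fun n => ?_)).mono
      fun x hx => hx.mono fun n hn => not_lt.1 hn
  refine (measureReal_le_sum_of_inter_fiber_le (c n)
    (w := fun b => Real.exp (n * -δ) * W n b) fun b => ?_).trans ?_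
  · rcases lt_or_ge (μ.real (c n ⁻¹' {b})) (Real.exp (n * -δ) * W n b) with hb | hb
    · exact (measureReal_mono inter_subset_right).trans hb.le
    · have hempty : {x | μ.real (c n ⁻¹' {c n x}) < Real.exp (n * -δ) * W n (c n x)} ∩
          c n ⁻¹' {b} = ∅ := by
        ext x
        simp only [mem_inter_iff, mem_ofPred_eq, mem_preimage, mem_singleton_iff,
          mem_empty_iff_false, iff_false, not_and]
        rintro hx rfl
        exact hx.not_ge hb
      rw [hempty, measureReal_empty]
      exact mul_nonneg (Real.exp_pos _).le (hW n b)
  · rw [← Finset.mul_sum]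
    exact mul_le_of_le_one_right (Real.exp_pos _).le (hsum n)

variable [MeasurableSpace β] [MeasurableSingletonClass β] [IsFiniteMeasure μ] {c : Ω → β}

theorem integrable_comp_of_finite [Finite β] (hc : Measurable c) (F : β → ℝ) :
    Integrable (fun x => F (c x)) μ :=
  Integrable.of_finite.comp_measurable hc

variable [Fintype β]

theorem integral_comp_of_fintype (hc : Measurable c) (F : β → ℝ) :
    ∫ x, F (c x) ∂μ = ∑ b, μ.real (c ⁻¹' {b}) * F b := by
  rw [← integral_map hc.aemeasurable (f := F) (measurable_of_finite F).aestronglyMeasurable,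
    integral_fintype .of_finite]
  simp only [smul_eq_mul, map_measureReal_apply hc (measurableSet_singleton _)]

theorem sum_measureReal_fiber (hc : Measurable c) :
    ∑ b, μ.real (c ⁻¹' {b}) = μ.real univ := by
  simpa using sum_measureReal_preimage_singleton (μ := μ) Finset.univ fun b _ =>
    hc (measurableSet_singleton b)

end FiniteCodes

section Recurrence

variable {X : Type*} [MeasurableSpace X] {μ : Measure X} [IsProbabilityMeasure μ] {f : X → X}

theorem measureReal_setOf_no_return_le (hf : MeasurePreserving f μ μ) {s : Set X}
    (hs : MeasurableSet s) (K : ℕ) :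
    μ.real {x ∈ s | ∀ k, 1 ≤ k → k ≤ K → f^[k] x ∉ s} ≤ ((K : ℝ) + 1)⁻¹ := by
  set E := {x ∈ s | ∀ k, 1 ≤ k → k ≤ K → f^[k] x ∉ s} with hE
  have hEm : MeasurableSet E := by
    have hinter : E = s ∩ ⋂ k ∈ Icc 1 K, (f^[k] ⁻¹' s)ᶜ := by ext; simp [hE]
    rw [hinter]
    exact hs.inter <| .iInter fun k => .iInter fun _ => (hf.measurable.iterate k hs).compl
  have hmul : ((K + 1 : ℕ) : ℝ≥0∞) * μ E ≤ μ univ := by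
    by_contra! hlt
    obtain ⟨x, hx, k, hk, hkx⟩ :=
      hf.exists_mem_iterate_mem_of_measure_univ_lt_mul_measure hEm.nullMeasurableSet hlt
    exact hx.2 k hk.1 (Nat.lt_succ_iff.1 hk.2) hkx.1
  have hreal : ((K : ℝ) + 1) * μ.real E ≤ 1 := by
    simpa [measureReal_def, ENNReal.toReal_add] using
      ENNReal.toReal_mono (measure_ne_top μ _) hmul
  rwa [← one_div, le_div_iff₀' (by positivity)]

theorem measureReal_setOf_fiber_no_return_le {β : Type*} [Finite β] [MeasurableSpace β]
    [MeasurableSingletonClass β] (hf : MeasurePreserving f μ μ) {c : X → β} (hc : Measurable c)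
    {a : ℝ} (ha : 0 < a) (K : ℕ) :
    μ.real {x | a ≤ μ.real (c ⁻¹' {c x}) ∧ ∀ k, 1 ≤ k → k ≤ K → c (f^[k] x) ≠ c x} ≤
      (a * (K + 1))⁻¹ := by
  cases nonempty_fintype β
  refine (measureReal_le_sum_of_inter_fiber_le c
    (w := fun b => μ.real (c ⁻¹' {b}) * (a * (K + 1))⁻¹) fun b => ?_).trans_eq ?_
  · rcases le_or_gt a (μ.real (c ⁻¹' {b})) with hb | hb
    · calc μ.real _ ≤ μ.real {x ∈ c ⁻¹' {b} | ∀ k, 1 ≤ k → k ≤ K → f^[k] x ∉ c ⁻¹' {b}} :=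
            measureReal_mono (by rintro x ⟨⟨-, hx⟩, rfl⟩; exact ⟨rfl, hx⟩)
        _ ≤ ((K : ℝ) + 1)⁻¹ :=
            measureReal_setOf_no_return_le hf (hc (measurableSet_singleton b)) K
        _ = a * (a * (K + 1))⁻¹ := by field_simp
        _ ≤ μ.real (c ⁻¹' {b}) * (a * (K + 1))⁻¹ := by gcongr
    · calc μ.real _ ≤ μ.real (∅ : Set X) :=
            measureReal_mono (by rintro x ⟨⟨hx, -⟩, rfl⟩; exact hb.not_ge hx)
        _ ≤ _ := by rw [measureReal_empty]; positivity
  · rw [← Finset.sum_mul, sum_measureReal_fiber hc, probReal_univ, one_mul]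

end Recurrence

section Words

variable {X α : Type*}

/-- The itinerary of length `n` of `x`: the symbols `P x, P (f x), …, P (f^[n-1] x)`. Two points
lie in the same element of `⋁_{i<n} f⁻ⁱQ` exactly when their itineraries of length `n` agree. -/
def itinerary (f : X → X) (P : X → α) (n : ℕ) (x : X) : Fin n → α :=
  fun i => P (f^[i] x)

theorem itinerary_eq_itinerary_iff {f : X → X} {P : X → α} {n : ℕ} {x y : X} :
    itinerary f P n x = itinerary f P n y ↔ ∀ i < n, P (f^[i] x) = P (f^[i] y) := by
  rw [funext_iff, Fin.forall_iff]
  rfl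

theorem tail_itinerary (f : X → X) (P : X → α) (n : ℕ) (x : X) :
    Fin.tail (itinerary f P (n + 1) x) = itinerary f P n (f x) :=
  rfl

theorem itinerary_succ (f : X → X) (P : X → α) (n : ℕ) (x : X) :
    itinerary f P (n + 1) x = Fin.cons (P x) (itinerary f P n (f x)) :=
  (Fin.cons_self_tail _).symm

theorem sum_word_succ [Fintype α] {M : Type*} [AddCommMonoid M] {n : ℕ}
    (G : (Fin (n + 1) → α) → M) : ∑ w, G w = ∑ v, ∑ a, G (Fin.cons a v) := by
  rw [← (Fin.consEquiv fun _ => α).sum_comp, Fintype.sum_prod_type_right]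
  rfl

variable [MeasurableSpace X] {μ : Measure X} {f : X → X} {P : X → α}

theorem measurable_itinerary [MeasurableSpace α] (hf : Measurable f) (hP : Measurable P) (n : ℕ) :
    Measurable (itinerary f P n) :=
  measurable_pi_lambda _ fun i => hP.comp (hf.iterate i)

/-- The probability that the itinerary of length `n` is the word `w`, i.e. the measure of the
corresponding element of the `n`-th refined partition. -/
noncomputable def wordProb (μ : Measure X) (f : X → X) (P : X → α) (n : ℕ) (w : Fin n → α) : ℝ :=
  μ.real (itinerary f P n ⁻¹' {w})

/-- The conditional probability of the first symbol of `w` given that the next `k` symbols are the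
tail of `w`. It is `0`, by division by zero, when the tail has probability zero. -/
noncomputable def condProb (μ : Measure X) (f : X → X) (P : X → α) (k : ℕ)
    (w : Fin (k + 1) → α) : ℝ :=
  wordProb μ f P (k + 1) w / wordProb μ f P k (Fin.tail w)

/-- The probability of a word of length `k + n` in the order-`k` Markov approximation of the
symbolic process, built from the right: the last `k` symbols have their true distribution, and each
earlier symbol is drawn from its conditional distribution given the next `k`. -/
noncomputable def markovProb (μ : Measure X) (f : X → X) (P : X → α) (k : ℕ) :
    (n : ℕ) → (Fin (k + n) → α) → ℝ
  | 0, w => wordProb μ f P k w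
  | n + 1, w => condProb μ f P k (fun i => w (i.castLE (by lia))) *
      markovProb μ f P k n (Fin.tail w)

theorem wordProb_nonneg (n : ℕ) (w : Fin n → α) : 0 ≤ wordProb μ f P n w :=
  measureReal_nonneg

theorem condProb_nonneg (k : ℕ) (w : Fin (k + 1) → α) : 0 ≤ condProb μ f P k w :=
  div_nonneg (wordProb_nonneg _ _) (wordProb_nonneg _ _)

theorem markovProb_nonneg (k n : ℕ) (w : Fin (k + n) → α) : 0 ≤ markovProb μ f P k n w := by
  induction n with
  | zero => exact wordProb_nonneg k w
  | succ n ih => exact mul_nonneg (condProb_nonneg _ _) (ih _)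

theorem wordProb_itinerary_le_of_le [IsFiniteMeasure μ] {k n : ℕ} (hkn : k ≤ n) (x : X) :
    wordProb μ f P n (itinerary f P n x) ≤ wordProb μ f P k (itinerary f P k x) :=
  measureReal_mono fun _ hy => itinerary_eq_itinerary_iff.2 fun i hi =>
    itinerary_eq_itinerary_iff.1 hy i (hi.trans_le hkn)

variable [MeasurableSpace α] [MeasurableSingletonClass α]

theorem measureReal_setOf_itinerary_iterate_eq (hf : MeasurePreserving f μ μ) (hP : Measurable P)
    (n k : ℕ) (w : Fin n → α) :
    μ.real {x | itinerary f P n (f^[k] x) = w} = wordProb μ f P n w :=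
  congrArg ENNReal.toReal <| (hf.iterate k).measure_preimage
    (measurable_itinerary hf.measurable hP n (measurableSet_singleton w)).nullMeasurableSet

theorem wordProb_itinerary_add_le [IsFiniteMeasure μ] (hf : MeasurePreserving f μ μ)
    (hP : Measurable P) (k n : ℕ) (x : X) :
    wordProb μ f P (k + n) (itinerary f P (k + n) x) ≤
      wordProb μ f P k (itinerary f P k (f^[n] x)) := by
  rw [← measureReal_setOf_itinerary_iterate_eq hf hP k n]
  refine measureReal_mono fun y hy => itinerary_eq_itinerary_iff.2 fun i hi => ?_
  simpa only [← Function.iterate_add_apply] using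
    itinerary_eq_itinerary_iff.1 hy (i + n) (by lia)

theorem wordProb_succ_le_wordProb_tail [IsFiniteMeasure μ] (hf : MeasurePreserving f μ μ)
    (hP : Measurable P) (k : ℕ) (w : Fin (k + 1) → α) :
    wordProb μ f P (k + 1) w ≤ wordProb μ f P k (Fin.tail w) := by
  rw [← measureReal_setOf_itinerary_iterate_eq hf hP k 1]
  exact measureReal_mono fun y hy => congrArg Fin.tail hy

theorem condProb_le_one [IsFiniteMeasure μ] (hf : MeasurePreserving f μ μ) (hP : Measurable P)
    (k : ℕ) (w : Fin (k + 1) → α) : condProb μ f P k w ≤ 1 :=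
  div_le_one_of_le₀ (wordProb_succ_le_wordProb_tail hf hP k w) (wordProb_nonneg _ _)

theorem condProb_mul_wordProb_tail [IsFiniteMeasure μ] (hf : MeasurePreserving f μ μ)
    (hP : Measurable P) (k : ℕ) (w : Fin (k + 1) → α) :
    condProb μ f P k w * wordProb μ f P k (Fin.tail w) = wordProb μ f P (k + 1) w :=
  div_mul_cancel_of_imp fun h => le_antisymm
    (h ▸ wordProb_succ_le_wordProb_tail hf hP k w) (wordProb_nonneg _ _)

theorem ae_wordProb_itinerary_iterate_pos [Finite α] [IsFiniteMeasure μ]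
    (hf : MeasurePreserving f μ μ) (hP : Measurable P) :
    ∀ᵐ x ∂μ, ∀ n k, 0 < wordProb μ f P n (itinerary f P n (f^[k] x)) := by
  filter_upwards [ae_all_iff.2 fun n => ae_measureReal_fiber_pos (μ := μ) (itinerary f P n)]
    with x hx n k
  exact (hx (n + k)).trans_le (wordProb_itinerary_add_le hf hP n k x)

theorem ae_condProb_itinerary_iterate_pos [Finite α] [IsFiniteMeasure μ]
    (hf : MeasurePreserving f μ μ) (hP : Measurable P) :
    ∀ᵐ x ∂μ, ∀ k j, 0 < condProb μ f P k (itinerary f P (k + 1) (f^[j] x)) := by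
  filter_upwards [ae_wordProb_itinerary_iterate_pos hf hP] with x hx k j
  rw [condProb, tail_itinerary, ← Function.iterate_succ_apply' f]
  exact div_pos (hx (k + 1) j) (hx k (j + 1))

variable [Fintype α]

theorem sum_wordProb_cons [IsFiniteMeasure μ] (hf : MeasurePreserving f μ μ) (hP : Measurable P)
    (k : ℕ) (v : Fin k → α) : ∑ a, wordProb μ f P (k + 1) (Fin.cons a v) = wordProb μ f P k v := by
  classical
  have hsum := sum_measureReal_preimage_singleton (μ := μ)
    (Finset.univ.image fun a => (Fin.cons a v : Fin (k + 1) → α)) fun w _ =>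
      measurable_itinerary hf.measurable hP (k + 1) (measurableSet_singleton w)
  rw [Finset.sum_image (Fin.cons_left_injective (α := fun _ => α) v).injOn] at hsum
  refine hsum.trans ?_
  rw [← measureReal_setOf_itinerary_iterate_eq hf hP k 1]
  congr 1
  ext x
  simp [itinerary_succ, Fin.cons_inj, eq_comm]

theorem sum_condProb_cons_le_one [IsFiniteMeasure μ] (hf : MeasurePreserving f μ μ)
    (hP : Measurable P) (k : ℕ) (v : Fin k → α) : ∑ a, condProb μ f P k (Fin.cons a v) ≤ 1 := by
  simp only [condProb, Fin.tail_cons, ← Finset.sum_div, sum_wordProb_cons hf hP]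
  exact div_self_le_one _

variable [IsProbabilityMeasure μ]

theorem sum_wordProb (hf : Measurable f) (hP : Measurable P) (n : ℕ) :
    ∑ w, wordProb μ f P n w = 1 :=
  (sum_measureReal_fiber (measurable_itinerary hf hP n)).trans probReal_univ

theorem sum_markovProb_le_one (hf : MeasurePreserving f μ μ) (hP : Measurable P) (k n : ℕ) :
    ∑ w, markovProb μ f P k n w ≤ 1 := by
  induction n with
  | zero => exact (sum_wordProb hf.measurable hP k).le
  | succ n ih =>
    refine le_trans ?_ ih
    change ∑ w : Fin (k + n + 1) → α, markovProb μ f P k (n + 1) w ≤ _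
    rw [sum_word_succ]
    refine Finset.sum_le_sum fun v _ => ?_
    have hcons (a : α) : markovProb μ f P k (n + 1) (Fin.cons a v) =
        condProb μ f P k (Fin.cons a fun i => v (i.castLE (by lia))) * markovProb μ f P k n v := by
      rw [markovProb]
      congr 2
      ext i
      cases i using Fin.cases <;> rfl
    simp only [hcons, ← Finset.sum_mul]
    exact mul_le_of_le_one_left (markovProb_nonneg k n v) (sum_condProb_cons_le_one hf hP k _)

theorem integral_inv_condProb_le (hf : MeasurePreserving f μ μ) (hP : Measurable P) (k : ℕ) :
    ∫ x, (condProb μ f P k (itinerary f P (k + 1) x))⁻¹ ∂μ ≤ Fintype.card α := by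
  rw [integral_comp_of_fintype (measurable_itinerary hf.measurable hP (k + 1))
    fun w => (condProb μ f P k w)⁻¹]
  calc ∑ w, wordProb μ f P (k + 1) w * (condProb μ f P k w)⁻¹
      ≤ ∑ w : Fin (k + 1) → α, wordProb μ f P k (Fin.tail w) := by
        refine Finset.sum_le_sum fun w _ => ?_
        rw [condProb, inv_div, mul_div_left_comm]
        exact mul_le_of_le_one_right (wordProb_nonneg _ _) (div_self_le_one _)
    _ = Fintype.card α := by
        simp [sum_word_succ, ← Finset.mul_sum, sum_wordProb hf.measurable hP]

end Words

section Entropy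

variable {X : Type*} [MeasurableSpace X] {m : ℕ} {μ : Measure X} {f : X → X} {P : X → Fin m}

theorem refinedEntropy_eq_sum_negMulLog_wordProb (n : ℕ) :
    refinedEntropy μ f P n = ∑ w, Real.negMulLog (wordProb μ f P n w) := by
  refine Finset.sum_congr rfl fun w _ => congrArg (fun s => Real.negMulLog (μ.real s)) ?_
  ext x
  simp [itinerary, funext_iff]

variable [IsProbabilityMeasure μ]

theorem refinedEntropy_nonneg (n : ℕ) : 0 ≤ refinedEntropy μ f P n := by
  rw [refinedEntropy_eq_sum_negMulLog_wordProb]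
  exact Finset.sum_nonneg fun w _ => Real.negMulLog_nonneg measureReal_nonneg measureReal_le_one

theorem refinedEntropy_zero : refinedEntropy μ f P 0 = 0 := by
  simp [refinedEntropy]

theorem partitionEntropy_le_refinedEntropy_div {n : ℕ} (hn : 1 ≤ n) :
    partitionEntropy μ f P ≤ refinedEntropy μ f P n / n := by
  obtain ⟨k, rfl⟩ := Nat.exists_eq_add_of_le' hn
  have hbdd : BddBelow (range fun k : ℕ => refinedEntropy μ f P (k + 1) / ((k : ℝ) + 1)) :=
    ⟨0, forall_mem_range.2 fun k => div_nonneg (refinedEntropy_nonneg _) (by positivity)⟩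
  rw [Nat.cast_add_one]
  exact ciInf_le hbdd k

theorem exists_refinedEntropy_succ_sub_lt {c : ℝ} (hc : partitionEntropy μ f P < c) :
    ∃ k, refinedEntropy μ f P (k + 1) - refinedEntropy μ f P k < c := by
  by_contra! hge
  refine hc.not_ge (le_ciInf fun n => ?_)
  rw [le_div_iff₀ (by positivity)]
  calc c * (n + 1) = ∑ _k ∈ Finset.range (n + 1), c := by simp [mul_comm]
    _ ≤ ∑ k ∈ Finset.range (n + 1), (refinedEntropy μ f P (k + 1) - refinedEntropy μ f P k) :=
        Finset.sum_le_sum fun k _ => hge k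
    _ = refinedEntropy μ f P (n + 1) := by
        rw [Finset.sum_range_sub, refinedEntropy_zero, sub_zero]

theorem partitionEntropy_le_of_refinedEntropy_succ_sub_le {b : ℕ → ℝ} {B : ℝ}
    (hb : ∀ k, refinedEntropy μ f P (k + 1) - refinedEntropy μ f P k ≤ b k)
    (hB : Tendsto b atTop (𝓝 B)) : partitionEntropy μ f P ≤ B := by
  refine ge_of_tendsto hB.cesaro ?_
  filter_upwards [eventually_ge_atTop 1] with n hn
  calc partitionEntropy μ f P ≤ refinedEntropy μ f P n / n :=
        partitionEntropy_le_refinedEntropy_div hn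
    _ = (n : ℝ)⁻¹ * ∑ k ∈ Finset.range n,
          (refinedEntropy μ f P (k + 1) - refinedEntropy μ f P k) := by
        rw [Finset.sum_range_sub, refinedEntropy_zero, sub_zero, div_eq_inv_mul]
    _ ≤ (n : ℝ)⁻¹ * ∑ k ∈ Finset.range n, b k := by
        gcongr with k
        exact hb k

theorem integral_neg_log_wordProb (hf : Measurable f) (hP : Measurable P) (n : ℕ) :
    ∫ x, -Real.log (wordProb μ f P n (itinerary f P n x)) ∂μ = refinedEntropy μ f P n := by
  rw [integral_comp_of_fintype (measurable_itinerary hf hP n)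
    fun w => -Real.log (wordProb μ f P n w), refinedEntropy_eq_sum_negMulLog_wordProb]
  refine Finset.sum_congr rfl fun w _ => ?_
  rw [Real.negMulLog, wordProb]
  ring

theorem integral_neg_log_condProb (hf : MeasurePreserving f μ μ) (hP : Measurable P) (k : ℕ) :
    ∫ x, -Real.log (condProb μ f P k (itinerary f P (k + 1) x)) ∂μ =
      refinedEntropy μ f P (k + 1) - refinedEntropy μ f P k := by
  have hint (n : ℕ) : Integrable (fun x => -Real.log (wordProb μ f P n (itinerary f P n x))) μ :=
    integrable_comp_of_finite (measurable_itinerary hf.measurable hP n)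
      fun w => -Real.log (wordProb μ f P n w)
  have hint' : Integrable (fun x => -Real.log (wordProb μ f P k (itinerary f P k (f x)))) μ :=
    hf.integrable_comp_of_integrable (hint k)
  rw [← integral_neg_log_wordProb hf.measurable hP, ← integral_neg_log_wordProb hf.measurable hP,
    ← integral_comp_eq_of_measurePreserving hf (hint k).aestronglyMeasurable,
    ← integral_sub (hint (k + 1)) hint']
  refine integral_congr_ae ?_
  filter_upwards [ae_wordProb_itinerary_iterate_pos hf hP] with x hx
  have hnum : wordProb μ f P (k + 1) (itinerary f P (k + 1) x) ≠ 0 := (hx (k + 1) 0).ne'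
  have hden : wordProb μ f P k (itinerary f P k (f x)) ≠ 0 := (hx k 1).ne'
  rw [condProb, tail_itinerary, Real.log_div hnum hden]
  ring

end Entropy

section ReturnTimesUpperBound

variable {X : Type*} [MeasurableSpace X] {μ : Measure X} {f : X → X}

theorem markovProb_itinerary_eq {α : Type*} {P : X → α} {k : ℕ} {x : X}
    (hpos : ∀ j, 0 < condProb μ f P k (itinerary f P (k + 1) (f^[j] x))) (n : ℕ) :
    markovProb μ f P k n (itinerary f P (k + n) x) =
      Real.exp (-birkhoffSum f
          (fun y => -Real.log (condProb μ f P k (itinerary f P (k + 1) y))) n x) *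
        wordProb μ f P k (itinerary f P k (f^[n] x)) := by
  induction n generalizing x with
  | zero => simp [markovProb]
  | succ n ih =>
    have hpos_zero : 0 < condProb μ f P k (itinerary f P (k + 1) x) := hpos 0
    rw [birkhoffSum_succ', neg_add, neg_neg, Real.exp_add, Real.exp_log hpos_zero, mul_assoc,
      Function.iterate_succ_apply, ← ih fun j => hpos (j + 1)]
    rfl

variable [IsProbabilityMeasure μ] {m : ℕ} {P : X → Fin m}

theorem ae_eventually_exp_le_markovProb (hf : Ergodic f μ) (hP : Measurable P) {k : ℕ} {c : ℝ}
    (hc : refinedEntropy μ f P (k + 1) - refinedEntropy μ f P k < c) :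
    ∀ᵐ x ∂μ, ∀ᶠ n : ℕ in atTop,
      Real.exp (n * -c) ≤ markovProb μ f P k n (itinerary f P (k + n) x) := by
  have hmp := hf.toMeasurePreserving
  obtain ⟨b, hb, hbc⟩ := exists_between hc
  have hint : Integrable
      (fun x => -Real.log (condProb μ f P k (itinerary f P (k + 1) x))) μ :=
    integrable_comp_of_finite (measurable_itinerary hf.measurable hP (k + 1))
      fun w => -Real.log (condProb μ f P k w)
  rw [← integral_neg_log_condProb hmp hP] at hb
  have hdecay : Tendsto (fun n : ℕ => Real.exp (n * (b - c))) atTop (𝓝 0) :=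
    (Real.summable_exp_nat_mul_iff.2 (sub_neg.2 hbc)).tendsto_atTop_zero
  have hword : ∀ᶠ n : ℕ in atTop, ∀ w, 0 < wordProb μ f P k w →
      Real.exp (n * (b - c)) ≤ wordProb μ f P k w :=
    eventually_all.2 fun w => by
      by_cases hw : 0 < wordProb μ f P k w
      · simpa [hw] using hdecay.eventually_le_const hw
      · simp [hw]
  filter_upwards [ae_eventually_birkhoffAverage_lt hf hint hb,
    ae_condProb_itinerary_iterate_pos hmp hP, ae_wordProb_itinerary_iterate_pos hmp hP]
    with x havg hcond hpos
  filter_upwards [havg, hword, eventually_gt_atTop 0] with n hn hnw hn0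
  rw [birkhoffAverage, smul_eq_mul, inv_mul_lt_iff₀ (by positivity)] at hn
  calc Real.exp (n * -c) = Real.exp (-(n * b)) * Real.exp (n * (b - c)) := by
        rw [← Real.exp_add]; ring_nf
    _ ≤ Real.exp (-birkhoffSum f
            (fun y => -Real.log (condProb μ f P k (itinerary f P (k + 1) y))) n x) *
          wordProb μ f P k (itinerary f P k (f^[n] x)) := by
        gcongr
        exact hnw _ (hpos k n)
    _ = markovProb μ f P k n (itinerary f P (k + n) x) := (markovProb_itinerary_eq (hcond k) n).symm

theorem ae_eventually_exp_le_wordProb (hf : Ergodic f μ) (hP : Measurable P) {c : ℝ}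
    (hc : partitionEntropy μ f P < c) :
    ∀ᵐ x ∂μ, ∀ᶠ n : ℕ in atTop, Real.exp (n * -c) ≤ wordProb μ f P n (itinerary f P n x) := by
  have hmp := hf.toMeasurePreserving
  obtain ⟨b, hb, hbc⟩ := exists_between hc
  obtain ⟨k, hk⟩ := exists_refinedEntropy_succ_sub_lt hb
  filter_upwards [ae_eventually_exp_le_markovProb hf hP hk,
    ae_eventually_exp_mul_weight_le_measureReal_fiber (μ := μ) (fun n => itinerary f P (k + n))
      (fun n => markovProb_nonneg k n) (sum_markovProb_le_one hmp hP k) (sub_pos.2 hbc)]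
    with x hmarkov hfiber
  filter_upwards [hmarkov, hfiber] with n hn hn'
  calc Real.exp (n * -c) = Real.exp (n * -(c - b)) * Real.exp (n * -b) := by
        rw [← Real.exp_add]; ring_nf
    _ ≤ Real.exp (n * -(c - b)) * markovProb μ f P k n (itinerary f P (k + n) x) := by gcongr
    _ ≤ wordProb μ f P (k + n) (itinerary f P (k + n) x) := hn'
    _ ≤ wordProb μ f P n (itinerary f P n x) := wordProb_itinerary_le_of_le (by lia) x

theorem ae_eventually_exists_itinerary_return (hf : Ergodic f μ) (hP : Measurable P) {c : ℝ}
    (hc : partitionEntropy μ f P < c) :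
    ∀ᵐ x ∂μ, ∀ᶠ n : ℕ in atTop, ∃ k : ℕ, 1 ≤ k ∧ (k : ℝ) ≤ Real.exp (n * c) ∧
      itinerary f P n (f^[k] x) = itinerary f P n x := by
  obtain ⟨b, hb, hbc⟩ := exists_between hc
  have hbad (n : ℕ) := measureReal_setOf_fiber_no_return_le hf.toMeasurePreserving
    (measurable_itinerary hf.measurable hP n) (Real.exp_pos (n * -b)) ⌊Real.exp (n * c)⌋₊
  have hbound (n : ℕ) : (Real.exp (n * -b) * (⌊Real.exp (n * c)⌋₊ + 1))⁻¹ ≤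
      Real.exp (n * (b - c)) := by
    calc (Real.exp (n * -b) * (⌊Real.exp (n * c)⌋₊ + 1))⁻¹
        ≤ (Real.exp (n * -b) * Real.exp (n * c))⁻¹ := by
          gcongr
          exact (Nat.lt_floor_add_one _).le
      _ = Real.exp (n * (b - c)) := by rw [← Real.exp_add, ← Real.exp_neg]; ring_nf
  filter_upwards [ae_eventually_exp_le_wordProb hf hP hb,
    ae_eventually_notMem_of_measureReal_le
      (Real.summable_exp_nat_mul_iff.2 (sub_neg.2 hbc))
      (.of_forall fun n => (hbad n).trans (hbound n))] with x hprob hreturn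
  filter_upwards [hprob, hreturn] with n hn hn'
  by_contra! hnone
  exact hn' ⟨hn, fun k hk hkn => hnone k hk ((Nat.le_floor_iff (Real.exp_pos _).le).1 hkn)⟩

end ReturnTimesUpperBound

section CondProbLimit

open scoped ProbabilityTheory

theorem condExp_fiber_ae_eq_div {Ω β γ : Type*} [MeasurableSpace Ω] [MeasurableSpace β]
    [Finite β] [MeasurableSingletonClass β] [MeasurableSpace γ] [StandardBorelSpace γ]
    [Nonempty γ] {μ : Measure Ω} [IsFiniteMeasure μ] {Z : Ω → β} {Y : Ω → γ}
    (hZ : Measurable Z) (hY : Measurable Y) (a : γ) :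
    μ⟦Y ⁻¹' {a} | MeasurableSpace.comap Z inferInstance⟧ =ᵐ[μ]
      fun x => μ.real (Z ⁻¹' {Z x} ∩ Y ⁻¹' {a}) / μ.real (Z ⁻¹' {Z x}) := by
  filter_upwards [ProbabilityTheory.condDistrib_ae_eq_condExp (μ := μ) hZ hY
    (measurableSet_singleton a), ae_measureReal_fiber_pos (μ := μ) Z] with x hx hpos
  have hmap : μ.map Z {Z x} = μ (Z ⁻¹' {Z x}) := Measure.map_apply hZ (measurableSet_singleton _)
  have hne : μ.map Z {Z x} ≠ 0 := hmap ▸ (measureReal_ne_zero_iff (by finiteness)).1 hpos.ne'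
  rw [← hx, measureReal_def, ProbabilityTheory.condDistrib_apply_of_ne_zero hY _ hne, hmap,
    Measure.map_apply (hZ.prodMk hY)
      ((measurableSet_singleton _).prod (measurableSet_singleton _)),
    ENNReal.toReal_mul, ENNReal.toReal_inv, div_eq_inv_mul]
  rfl

variable {X α : Type*} [MeasurableSpace X] [MeasurableSpace α] [MeasurableSingletonClass α]
  [Finite α] {μ : Measure X} {f : X → X} {P : X → α}

/-- The filtration of the future: the `k`-th σ-algebra is generated by the symbols
`P (f x), …, P (f^[k] x)`. -/
def futureFiltration (hf : Measurable f) (hP : Measurable P) :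
    Filtration ℕ ‹MeasurableSpace X› where
  seq k := MeasurableSpace.comap (fun x => itinerary f P k (f x)) inferInstance
  mono' k l hkl := by
    have hrestrict : Measurable fun (w : Fin l → α) (i : Fin k) => w (i.castLE hkl) :=
      measurable_of_finite _
    have hcomp := hrestrict.comp (comap_measurable fun x => itinerary f P l (f x))
    exact hcomp.comap_le
  le' k := ((measurable_itinerary hf hP k).comp hf).comap_le

theorem ae_exists_tendsto_condProb_itinerary [IsFiniteMeasure μ]
    (hf : MeasurePreserving f μ μ) (hP : Measurable P) :
    ∀ᵐ x ∂μ, ∃ l, Tendsto (fun k => condProb μ f P k (itinerary f P (k + 1) x)) atTop (𝓝 l) := by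
  obtain _ | hX := isEmpty_or_nonempty X
  · exact .of_forall isEmptyElim
  have : Nonempty α := hX.map P
  let ℱ := futureFiltration hf.measurable hP
  have hlim : ∀ᵐ x ∂μ, ∀ a, Tendsto (fun k => (μ⟦P ⁻¹' {a} | ℱ k⟧) x) atTop
      (𝓝 ((μ⟦P ⁻¹' {a} | ⨆ k, ℱ k⟧) x)) :=
    ae_all_iff.2 fun a => tendsto_ae_condExp _
  have hcond : ∀ᵐ x ∂μ, ∀ a k, (μ⟦P ⁻¹' {a} | ℱ k⟧) x = _ :=
    ae_all_iff.2 fun a => ae_all_iff.2 fun k =>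
      condExp_fiber_ae_eq_div ((measurable_itinerary hf.measurable hP k).comp hf.measurable) hP a
  filter_upwards [hlim, hcond] with x hxlim hxcond
  refine ⟨_, (hxlim (P x)).congr fun k => ?_⟩
  rw [hxcond, condProb, tail_itinerary,
    ← measureReal_setOf_itinerary_iterate_eq hf hP k 1, wordProb]
  congr 2
  ext y
  simp [itinerary_succ, Fin.cons_inj, and_comm]

end CondProbLimit

section TruncatedInformation

/-- The logarithmic loss `-log t`, truncated at level `M`. -/
noncomputable def truncNegLog (M t : ℝ) : ℝ :=
  -Real.log (max t (Real.exp (-M)))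

theorem continuous_truncNegLog (M : ℝ) : Continuous (truncNegLog M) :=
  ((continuous_id.max continuous_const).log fun _ =>
    (lt_max_of_lt_right (Real.exp_pos _)).ne').neg

theorem truncNegLog_nonneg {M t : ℝ} (hM : 0 ≤ M) (ht : t ≤ 1) : 0 ≤ truncNegLog M t :=
  neg_nonneg.2 <| Real.log_nonpos (le_max_of_le_right (Real.exp_pos _).le) <|
    max_le ht (Real.exp_le_one_iff.2 (neg_nonpos.2 hM))

theorem truncNegLog_le (M t : ℝ) : truncNegLog M t ≤ M := by
  rw [truncNegLog, neg_le, Real.le_log_iff_exp_le (lt_max_of_lt_right (Real.exp_pos _))]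
  exact le_max_right _ _

theorem exp_truncNegLog_mul_le_one (M t : ℝ) : Real.exp (truncNegLog M t) * t ≤ 1 := by
  have hpos : 0 < max t (Real.exp (-M)) := lt_max_of_lt_right (Real.exp_pos _)
  rw [truncNegLog, Real.exp_neg, Real.exp_log hpos, inv_mul_le_iff₀ hpos, mul_one]
  exact le_max_left _ _

theorem neg_log_le_truncNegLog_add {M t : ℝ} (ht : 0 < t) :
    -Real.log t ≤ truncNegLog M t + Real.exp (-M) * t⁻¹ := by
  obtain hle | hlt := le_or_gt (Real.exp (-M)) t
  · rw [truncNegLog, max_eq_left hle]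
    exact le_add_of_nonneg_right (by positivity)
  · have hlog := Real.log_le_self (x := Real.exp (-M) * t⁻¹) (by positivity)
    rw [Real.log_mul (Real.exp_pos _).ne' (inv_ne_zero ht.ne'), Real.log_exp, Real.log_inv] at hlog
    rw [truncNegLog, max_eq_right hlt.le, Real.log_exp]
    linarith

variable {X α : Type*} [MeasurableSpace X] [MeasurableSpace α] [MeasurableSingletonClass α]
  {μ : Measure X} {f : X → X} {P : X → α}

/-- The truncated information carried by the symbol of `x` at time `0` once its next `k` symbols
are known. -/
noncomputable def truncInfo (μ : Measure X) (f : X → X) (P : X → α) (M : ℝ) (k : ℕ) (x : X) : ℝ :=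
  truncNegLog M (condProb μ f P k (itinerary f P (k + 1) x))

theorem measurable_truncInfo [Finite α] (hf : Measurable f) (hP : Measurable P) (M : ℝ) (k : ℕ) :
    Measurable (truncInfo μ f P M k) :=
  (measurable_of_finite fun w => truncNegLog M (condProb μ f P k w)).comp
    (measurable_itinerary hf hP (k + 1))

variable [IsFiniteMeasure μ]

theorem truncInfo_nonneg (hf : MeasurePreserving f μ μ) (hP : Measurable P) {M : ℝ} (hM : 0 ≤ M)
    (k : ℕ) (x : X) : 0 ≤ truncInfo μ f P M k x :=
  truncNegLog_nonneg hM (condProb_le_one hf hP k _)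

theorem abs_truncInfo_le (hf : MeasurePreserving f μ μ) (hP : Measurable P) {M : ℝ} (hM : 0 ≤ M)
    (k : ℕ) (x : X) : |truncInfo μ f P M k x| ≤ M := by
  rw [abs_of_nonneg (truncInfo_nonneg hf hP hM k x)]
  exact truncNegLog_le M _

theorem exp_truncInfo_mul_wordProb_le (hf : MeasurePreserving f μ μ) (hP : Measurable P)
    (M : ℝ) (k : ℕ) (x : X) :
    Real.exp (truncInfo μ f P M k x) * wordProb μ f P (k + 1) (itinerary f P (k + 1) x) ≤
      wordProb μ f P k (itinerary f P k (f x)) := by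
  rw [← condProb_mul_wordProb_tail hf hP, ← mul_assoc, tail_itinerary]
  exact mul_le_of_le_one_left (wordProb_nonneg _ _) (exp_truncNegLog_mul_le_one M _)

/-- The least truncated information carried by the symbol of `x` at time `0` once at least its next
`N` symbols are known. -/
noncomputable def minTruncInfo (μ : Measure X) (f : X → X) (P : X → α) (M : ℝ) (N : ℕ)
    (x : X) : ℝ :=
  ⨅ k, truncInfo μ f P M (N + k) x

theorem bddBelow_range_truncInfo (hf : MeasurePreserving f μ μ) (hP : Measurable P) {M : ℝ}
    (hM : 0 ≤ M) (N : ℕ) (x : X) : BddBelow (range fun k => truncInfo μ f P M (N + k) x) :=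
  ⟨0, forall_mem_range.2 fun k => truncInfo_nonneg hf hP hM (N + k) x⟩

theorem minTruncInfo_le (hf : MeasurePreserving f μ μ) (hP : Measurable P) {M : ℝ} (hM : 0 ≤ M)
    {N k : ℕ} (hk : N ≤ k) (x : X) : minTruncInfo μ f P M N x ≤ truncInfo μ f P M k x := by
  obtain ⟨j, rfl⟩ := Nat.exists_eq_add_of_le hk
  exact ciInf_le (bddBelow_range_truncInfo hf hP hM N x) j

theorem integrable_minTruncInfo [Finite α] (hf : MeasurePreserving f μ μ) (hP : Measurable P)
    {M : ℝ} (hM : 0 ≤ M) (N : ℕ) : Integrable (minTruncInfo μ f P M N) μ := by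
  refine .of_bound (Measurable.iInf fun k =>
    measurable_truncInfo hf.measurable hP M (N + k)).aestronglyMeasurable M (.of_forall fun x => ?_)
  have hnonneg : 0 ≤ minTruncInfo μ f P M N x :=
    Real.iInf_nonneg fun k => truncInfo_nonneg hf hP hM (N + k) x
  rw [Real.norm_of_nonneg hnonneg]
  exact (minTruncInfo_le hf hP hM le_rfl x).trans (truncNegLog_le M _)

theorem exp_birkhoffSum_minTruncInfo_mul_wordProb_le (hf : MeasurePreserving f μ μ)
    (hP : Measurable P) {M : ℝ} (hM : 0 ≤ M) {N J : ℕ} (hJ : N ≤ J) (n : ℕ) (x : X) :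
    Real.exp (birkhoffSum f (minTruncInfo μ f P M N) n x) *
        wordProb μ f P (J + n) (itinerary f P (J + n) x) ≤
      wordProb μ f P J (itinerary f P J (f^[n] x)) := by
  induction n generalizing x with
  | zero => simp
  | succ n ih =>
    calc Real.exp (birkhoffSum f (minTruncInfo μ f P M N) (n + 1) x) *
          wordProb μ f P (J + n + 1) (itinerary f P (J + n + 1) x)
        ≤ Real.exp (birkhoffSum f (minTruncInfo μ f P M N) n (f x)) *
          (Real.exp (truncInfo μ f P M (J + n) x) *
            wordProb μ f P (J + n + 1) (itinerary f P (J + n + 1) x)) := by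
          rw [birkhoffSum_succ', ← mul_assoc, ← Real.exp_add, add_comm]
          gcongr
          · exact wordProb_nonneg _ _
          · exact minTruncInfo_le hf hP hM (by lia) x
      _ ≤ Real.exp (birkhoffSum f (minTruncInfo μ f P M N) n (f x)) *
          wordProb μ f P (J + n) (itinerary f P (J + n) (f x)) := by
          gcongr
          exact exp_truncInfo_mul_wordProb_le hf hP M (J + n) x
      _ ≤ wordProb μ f P J (itinerary f P J (f^[n] (f x))) := ih (f x)

theorem exists_tendsto_integral_truncInfo [Finite α]
    (hf : MeasurePreserving f μ μ) (hP : Measurable P) {M : ℝ} (hM : 0 ≤ M) :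
    ∃ I, Tendsto (fun k => ∫ x, truncInfo μ f P M k x ∂μ) atTop (𝓝 I) ∧
      Tendsto (fun N => ∫ x, minTruncInfo μ f P M N x ∂μ) atTop (𝓝 I) := by
  obtain ⟨q, hq⟩ := skolem.1 (ae_exists_tendsto_condProb_itinerary hf hP)
  have hmeas := measurable_truncInfo (μ := μ) hf.measurable hP M
  have hlim : ∀ᵐ x ∂μ, Tendsto (fun k => truncInfo μ f P M k x) atTop (𝓝 (truncNegLog M (q x))) :=
    hq.mono fun x hx => ((continuous_truncNegLog M).tendsto _).comp hx
  exact ⟨∫ x, truncNegLog M (q x) ∂μ,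
    tendsto_integral_of_dominated_convergence (fun _ => M)
      (fun k => (hmeas k).aestronglyMeasurable) (integrable_const M)
      (fun k => .of_forall (abs_truncInfo_le hf hP hM k)) hlim,
    tendsto_integral_iInf_add hmeas (abs_truncInfo_le hf hP hM) hlim⟩

end TruncatedInformation

section ReturnTimesLowerBound

/-- The points whose first `n` symbols have conditional probability at most `A` given the `J`
symbols that follow them, stated without division. -/
def unlikelyPrefix {X α : Type*} [MeasurableSpace X] (μ : Measure X) (f : X → X) (P : X → α)
    (n J : ℕ) (A : ℝ) : Set X :=
  {x | wordProb μ f P (J + n) (itinerary f P (J + n) x) ≤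
    A * wordProb μ f P J (itinerary f P J (f^[n] x))}

variable {X : Type*} [MeasurableSpace X] {μ : Measure X} [IsProbabilityMeasure μ] {f : X → X}
  {m : ℕ} {P : X → Fin m}

theorem refinedEntropy_succ_sub_le_integral_truncInfo (hf : MeasurePreserving f μ μ)
    (hP : Measurable P) (M : ℝ) (k : ℕ) :
    refinedEntropy μ f P (k + 1) - refinedEntropy μ f P k ≤
      ∫ x, truncInfo μ f P M k x ∂μ + Real.exp (-M) * m := by
  have hint (F : (Fin (k + 1) → Fin m) → ℝ) : Integrable (fun x => F (itinerary f P (k + 1) x)) μ :=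
    integrable_comp_of_finite (measurable_itinerary hf.measurable hP (k + 1)) F
  have hinv : Integrable
      (fun x => Real.exp (-M) * (condProb μ f P k (itinerary f P (k + 1) x))⁻¹) μ :=
    hint fun w => Real.exp (-M) * (condProb μ f P k w)⁻¹
  have htrunc : Integrable (truncInfo μ f P M k) μ :=
    hint fun w => truncNegLog M (condProb μ f P k w)
  calc refinedEntropy μ f P (k + 1) - refinedEntropy μ f P k
      = ∫ x, -Real.log (condProb μ f P k (itinerary f P (k + 1) x)) ∂μ :=
        (integral_neg_log_condProb hf hP k).symm
    _ ≤ ∫ x, truncInfo μ f P M k x +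
          Real.exp (-M) * (condProb μ f P k (itinerary f P (k + 1) x))⁻¹ ∂μ := by
        refine integral_mono_ae (hint fun w => -Real.log (condProb μ f P k w))
          (htrunc.add hinv) ?_
        filter_upwards [ae_condProb_itinerary_iterate_pos hf hP] with x hx
        exact neg_log_le_truncNegLog_add (hx k 0)
    _ ≤ ∫ x, truncInfo μ f P M k x ∂μ + Real.exp (-M) * m := by
        rw [integral_add htrunc hinv, integral_const_mul]
        gcongr
        simpa using integral_inv_condProb_le hf hP k

theorem exists_lt_integral_minTruncInfo (hf : MeasurePreserving f μ μ) (hP : Measurable P) {c : ℝ}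
    (hc : c < partitionEntropy μ f P) :
    ∃ M : ℝ, 0 ≤ M ∧ ∃ N, c < ∫ x, minTruncInfo μ f P M N x ∂μ := by
  have herr : Tendsto (fun M : ℝ => c + Real.exp (-M) * m) atTop (𝓝 c) := by
    simpa using (Real.tendsto_exp_neg_atTop_nhds_zero.mul_const (m : ℝ)).const_add c
  obtain ⟨M, hM, hM0⟩ := ((herr.eventually_lt_const hc).and (eventually_ge_atTop 0)).exists
  obtain ⟨I, hI, hImin⟩ := exists_tendsto_integral_truncInfo hf hP hM0
  have hle : partitionEntropy μ f P ≤ I + Real.exp (-M) * m :=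
    partitionEntropy_le_of_refinedEntropy_succ_sub_le
      (refinedEntropy_succ_sub_le_integral_truncInfo hf hP M) (hI.add_const _)
  exact ⟨M, hM0, (hImin.eventually_const_lt (by linarith)).exists⟩

theorem ae_eventually_mem_unlikelyPrefix (hf : Ergodic f μ) (hP : Measurable P) {c : ℝ}
    (hc : c < partitionEntropy μ f P) :
    ∀ᵐ x ∂μ, ∀ᶠ n : ℕ in atTop, ∀ J ≥ n, x ∈ unlikelyPrefix μ f P n J (Real.exp (n * -c)) := by
  have hmp := hf.toMeasurePreserving
  obtain ⟨M, hM, N, hN⟩ := exists_lt_integral_minTruncInfo hmp hP hc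
  filter_upwards [ae_tendsto_birkhoffAverage hf (integrable_minTruncInfo hmp hP hM N)] with x hx
  filter_upwards [hx.eventually_const_lt hN, eventually_ge_atTop N, eventually_gt_atTop 0]
    with n hn hNn hn0 J hJ
  rw [birkhoffAverage, smul_eq_mul, lt_inv_mul_iff₀ (by positivity)] at hn
  rw [unlikelyPrefix, mem_ofPred_eq, mul_neg, Real.exp_neg, ← div_eq_inv_mul,
    le_div_iff₀ (Real.exp_pos _), mul_comm]
  refine le_trans ?_ (exp_birkhoffSum_minTruncInfo_mul_wordProb_le hmp hP hM (hNn.trans hJ) n x)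
  gcongr
  exact wordProb_nonneg _ _

end ReturnTimesLowerBound

section MistakePatterns

theorem eq_of_shift_eq_off {α : Type*} {u v : ℕ → α} {n J k : ℕ} {Γ : Finset ℕ} (hk : 1 ≤ k)
    (hkJ : k ≤ J) (hu : ∀ j < n, j ∉ Γ → u (j + k) = u j)
    (hv : ∀ j < n, j ∉ Γ → v (j + k) = v j) (hΓ : ∀ j ∈ Γ, u j = v j)
    (hend : ∀ i < J, u (i + n) = v (i + n)) : ∀ i < J + n, u i = v i := by
  intro i hi
  induction hd : J + n - i using Nat.strong_induction_on generalizing i with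
  | _ d ih =>
    obtain hn | hn := le_or_gt n i
    · simpa [Nat.sub_add_cancel hn] using hend (i - n) (by lia)
    by_cases hiΓ : i ∈ Γ
    · exact hΓ i hiΓ
    · rw [← hu i hn hiΓ, ← hv i hn hiΓ]
      exact ih _ (by lia) (i + k) (by lia) rfl

/-- The mistake patterns on `[0, n)` with at most `G` mistakes: the sets of positions `i < n` at
which two itineraries may differ. In the notation of the paper they are the complements of the index
sets `Λ ∈ I(g; n, Q)`, with `G = g n`. -/
def mistakePatterns (n G : ℕ) : Finset (Finset ℕ) :=
  (Finset.range n).powerset.filter (·.card ≤ G)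

theorem sum_mistakePatterns_pow_card_le {b r : ℝ} (hb : 0 ≤ b) (hr : 1 ≤ r) (n G : ℕ) :
    ∑ Γ ∈ mistakePatterns n G, b ^ Γ.card ≤ r ^ G * (1 + b / r) ^ n := by
  have hr0 : 0 < r := zero_lt_one.trans_le hr
  calc ∑ Γ ∈ mistakePatterns n G, b ^ Γ.card
      ≤ ∑ Γ ∈ mistakePatterns n G, r ^ G * (b / r) ^ Γ.card := by
        refine Finset.sum_le_sum fun Γ hΓ => ?_
        calc b ^ Γ.card = r ^ Γ.card * (b / r) ^ Γ.card := by
              rw [← mul_pow, mul_div_cancel₀ _ hr0.ne']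
          _ ≤ r ^ G * (b / r) ^ Γ.card := by
              gcongr
              exact (Finset.mem_filter.1 hΓ).2
    _ ≤ ∑ Γ ∈ (Finset.range n).powerset, r ^ G * (b / r) ^ Γ.card :=
        Finset.sum_le_sum_of_subset_of_nonneg (Finset.filter_subset _ _) fun _ _ _ => by positivity
    _ = r ^ G * (1 + b / r) ^ n := by
        rw [← Finset.mul_sum]
        congr 1
        simpa [add_comm] using Finset.sum_pow_mul_eq_add_pow (b / r) 1 (Finset.range n)

theorem eventually_sum_mistakePatterns_pow_card_le_exp {g : ℕ → ℕ}
    (hg : Tendsto (fun n : ℕ => (g n : ℝ) / n) atTop (𝓝 0)) {b δ : ℝ} (hb : 0 ≤ b) (hδ : 0 < δ) :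
    ∀ᶠ n : ℕ in atTop,
      ∑ Γ ∈ mistakePatterns n (g n), b ^ Γ.card ≤ Real.exp (n * δ) := by
  set r : ℝ := max 1 (b / (δ / 2))
  have hr1 : 1 ≤ r := le_max_left _ _
  have hbr : b / r ≤ δ / 2 := (div_le_comm₀ (by positivity) (by positivity)).1 (le_max_right _ _)
  have hlog : Tendsto (fun n : ℕ => (g n : ℝ) / n * Real.log r) atTop (𝓝 0) := by
    simpa using hg.mul_const (Real.log r)
  filter_upwards [hlog.eventually_le_const (half_pos hδ), eventually_gt_atTop 0] with n hn hn0
  have hpow : r ^ g n ≤ Real.exp (n * (δ / 2)) := by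
    rw [← Real.log_le_iff_le_exp (by positivity), Real.log_pow]
    rwa [div_mul_eq_mul_div, div_le_iff₀' (by positivity)] at hn
  calc ∑ Γ ∈ mistakePatterns n (g n), b ^ Γ.card
      ≤ r ^ g n * (1 + b / r) ^ n := sum_mistakePatterns_pow_card_le hb hr1 n (g n)
    _ ≤ Real.exp (n * (δ / 2)) * Real.exp (δ / 2) ^ n := by
        gcongr
        linarith [Real.add_one_le_exp (δ / 2)]
    _ = Real.exp (n * δ) := by
        rw [← Real.exp_nat_mul, ← Real.exp_add]
        ring_nf

end MistakePatterns

section MistakeReturns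

variable {X : Type*} {f : X → X}

/-- The points whose itinerary of length `n` recurs at time `k`, except possibly at the positions in
the mistake pattern `Γ`. -/
def recurrentOff {α : Type*} (f : X → X) (P : X → α) (n k : ℕ) (Γ : Finset ℕ) : Set X :=
  {x | ∀ j < n, j ∉ Γ → P (f^[j] (f^[k] x)) = P (f^[j] x)}

theorem exists_mem_recurrentOff_of_mem_mistakeCylinder {m : ℕ} {P : X → Fin m} {g : ℕ → ℕ}
    {n k : ℕ} {x : X} (h : f^[k] x ∈ mistakeCylinder f P g n x) :
    ∃ Γ ∈ mistakePatterns n (g n), x ∈ recurrentOff f P n k Γ := by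
  obtain ⟨Λ, hΛ, hcard, hagree⟩ := h
  refine ⟨Finset.range n \ Λ, ?_, fun j hj hjΓ => hagree j ?_⟩
  · rw [mistakePatterns, Finset.mem_filter, Finset.mem_powerset, Finset.card_sdiff_of_subset hΛ,
      Finset.card_range]
    exact ⟨Finset.sdiff_subset, by lia⟩
  · simpa [hj] using hjΓ

theorem mem_mistakeCylinder_of_itinerary_eq {m : ℕ} {P : X → Fin m} {n : ℕ} {x y : X}
    (h : itinerary f P n y = itinerary f P n x) (g : ℕ → ℕ) : y ∈ mistakeCylinder f P g n x :=
  ⟨Finset.range n, subset_rfl, by simp, fun j hj =>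
    itinerary_eq_itinerary_iff.1 h j (Finset.mem_range.1 hj)⟩

variable [MeasurableSpace X] {μ : Measure X} [IsProbabilityMeasure μ]

theorem measureReal_recurrentOff_inter_le {α : Type*} [Fintype α] [MeasurableSpace α]
    [MeasurableSingletonClass α] {P : X → α} (hf : Measurable f) (hP : Measurable P)
    {n J k : ℕ} (hk : 1 ≤ k) (hkJ : k ≤ J) (Γ : Finset ℕ) {A : ℝ} (hA : 0 ≤ A) :
    μ.real (recurrentOff f P n k Γ ∩ unlikelyPrefix μ f P n J A) ≤ A * Fintype.card α ^ Γ.card := by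
  set S := recurrentOff f P n k Γ ∩ unlikelyPrefix μ f P n J A
  let code (x : X) : (Fin J → α) × (Γ → α) := (itinerary f P J (f^[n] x), fun i => P (f^[i] x))
  have hcode {x y : X} (hx : x ∈ S) (hy : y ∈ S) (hxy : code y = code x) :
      itinerary f P (J + n) y = itinerary f P (J + n) x := by
    obtain ⟨hend, hmistakes⟩ := Prod.ext_iff.1 hxy
    have hend := itinerary_eq_itinerary_iff.1 hend
    have hx := hx.1
    have hy := hy.1
    simp only [recurrentOff, mem_ofPred_eq, ← Function.iterate_add_apply] at hx hy hend
    exact itinerary_eq_itinerary_iff.2 <| eq_of_shift_eq_off hk hkJ hy hx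
      (fun j hj => congrFun hmistakes ⟨j, hj⟩) hend
  have hfiber (b : (Fin J → α) × (Γ → α)) :
      μ.real (S ∩ code ⁻¹' {b}) ≤ A * wordProb μ f P J b.1 := by
    obtain hempty | ⟨x, hxS, rfl⟩ := (S ∩ code ⁻¹' {b}).eq_empty_or_nonempty
    · rw [hempty, measureReal_empty]
      exact mul_nonneg hA (wordProb_nonneg _ _)
    · exact (measureReal_mono fun y hy => hcode hxS hy.1 hy.2).trans hxS.2
  calc μ.real S ≤ ∑ b : (Fin J → α) × (Γ → α), A * wordProb μ f P J b.1 :=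
        measureReal_le_sum_of_inter_fiber_le code hfiber
    _ = A * Fintype.card α ^ Γ.card := by
        simp [Fintype.sum_prod_type_right, ← Finset.mul_sum, sum_wordProb hf hP]

variable {m : ℕ} {P : X → Fin m} {g : ℕ → ℕ}

theorem measureReal_setOf_mistake_return_le (hf : Measurable f) (hP : Measurable P) {n J K : ℕ}
    (hKJ : K ≤ J) {A : ℝ} (hA : 0 ≤ A) :
    μ.real {x ∈ unlikelyPrefix μ f P n J A |
        ∃ k, 1 ≤ k ∧ k ≤ K ∧ f^[k] x ∈ mistakeCylinder f P g n x} ≤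
      K * (A * ∑ Γ ∈ mistakePatterns n (g n), (m : ℝ) ^ Γ.card) := by
  calc _ ≤ μ.real (⋃ k ∈ Finset.Icc 1 K, ⋃ Γ ∈ mistakePatterns n (g n),
          recurrentOff f P n k Γ ∩ unlikelyPrefix μ f P n J A) := by
        refine measureReal_mono ?_ (measure_ne_top μ _)
        rintro x ⟨hx, k, hk, hkK, hmem⟩
        obtain ⟨Γ, hΓ, hxΓ⟩ := exists_mem_recurrentOff_of_mem_mistakeCylinder hmem
        exact mem_iUnion₂_of_mem (Finset.mem_Icc.2 ⟨hk, hkK⟩) (mem_iUnion₂_of_mem hΓ ⟨hxΓ, hx⟩)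
    _ ≤ ∑ _k ∈ Finset.Icc 1 K, ∑ Γ ∈ mistakePatterns n (g n), A * (m : ℝ) ^ Γ.card := by
        refine (measureReal_biUnion_finset_le _ _).trans (Finset.sum_le_sum fun k hk => ?_)
        refine (measureReal_biUnion_finset_le _ _).trans (Finset.sum_le_sum fun Γ _ => ?_)
        obtain ⟨hk1, hkK⟩ := Finset.mem_Icc.1 hk
        simpa using measureReal_recurrentOff_inter_le hf hP hk1 (hkK.trans hKJ) Γ hA
    _ = K * (A * ∑ Γ ∈ mistakePatterns n (g n), (m : ℝ) ^ Γ.card) := by simp [Finset.mul_sum]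

theorem ae_eventually_forall_notMem_mistakeCylinder (hf : Ergodic f μ) (hP : Measurable P)
    (hg : Tendsto (fun n : ℕ => (g n : ℝ) / n) atTop (𝓝 0)) {c : ℝ}
    (hc : c < partitionEntropy μ f P) :
    ∀ᵐ x ∂μ, ∀ᶠ n : ℕ in atTop, ∀ k : ℕ, 1 ≤ k → (k : ℝ) ≤ Real.exp (n * c) →
      f^[k] x ∉ mistakeCylinder f P g n x := by
  obtain ⟨b, hcb, hb⟩ := exists_between hc
  obtain ⟨a, hca, hab⟩ := exists_between hcb
  have hbad (n : ℕ) := measureReal_setOf_mistake_return_le (μ := μ) (g := g) hf.measurable hP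
    (n := n) (Nat.le_add_right ⌊Real.exp (n * c)⌋₊ n) (Real.exp_pos (n * -b)).le
  have hbound : ∀ᶠ n : ℕ in atTop, ⌊Real.exp (n * c)⌋₊ * (Real.exp (n * -b) *
      ∑ Γ ∈ mistakePatterns n (g n), (m : ℝ) ^ Γ.card) ≤ Real.exp (n * (c - a)) := by
    filter_upwards [eventually_sum_mistakePatterns_pow_card_le_exp hg m.cast_nonneg
      (sub_pos.2 hab)] with n hn
    calc _ ≤ Real.exp (n * c) * (Real.exp (n * -b) * Real.exp (n * (b - a))) := by
          gcongr
          exact Nat.floor_le (Real.exp_pos _).le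
      _ = Real.exp (n * (c - a)) := by
          rw [← Real.exp_add, ← Real.exp_add]
          ring_nf
  filter_upwards [ae_eventually_mem_unlikelyPrefix hf hP hb,
    ae_eventually_notMem_of_measureReal_le (Real.summable_exp_nat_mul_iff.2 (sub_neg.2 hca))
      (hbound.mono fun n hn => (hbad n).trans hn)] with x hprefix hreturn
  filter_upwards [hprefix, hreturn] with n hn hn' k hk hkc hmem
  exact hn' ⟨hn _ (by lia), k, hk, (Nat.le_floor_iff (Real.exp_pos _).le).2 hkc, hmem⟩

end MistakeReturns

section ReturnRate

variable {X : Type*} {f : X → X} {m : ℕ} {P : X → Fin m} {g : ℕ → ℕ} {n : ℕ} {x : X}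

theorem cylReturn_spec (h : ∃ k, 1 ≤ k ∧ f^[k] x ∈ mistakeCylinder f P g n x) :
    1 ≤ cylReturn f P g n x ∧ f^[cylReturn f P g n x] x ∈ mistakeCylinder f P g n x :=
  Nat.sInf_mem h

theorem log_cylReturn_div_le {k : ℕ} {c : ℝ} (hn : 0 < n) (hk : 1 ≤ k)
    (hkc : (k : ℝ) ≤ Real.exp (n * c)) (hmem : f^[k] x ∈ mistakeCylinder f P g n x) :
    Real.log (cylReturn f P g n x) / n ≤ c := by
  have hpos : (0 : ℝ) < cylReturn f P g n x := Nat.cast_pos.2 (cylReturn_spec ⟨k, hk, hmem⟩).1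
  have hle : cylReturn f P g n x ≤ k := Nat.sInf_le ⟨hk, hmem⟩
  rw [div_le_iff₀' (by positivity), Real.log_le_iff_le_exp hpos]
  exact (Nat.cast_le.2 hle).trans hkc

theorem lt_log_cylReturn_div {c : ℝ} (hn : 0 < n)
    (hreturn : ∃ k, 1 ≤ k ∧ f^[k] x ∈ mistakeCylinder f P g n x)
    (hearly : ∀ k : ℕ, 1 ≤ k → (k : ℝ) ≤ Real.exp (n * c) → f^[k] x ∉ mistakeCylinder f P g n x) :
    c < Real.log (cylReturn f P g n x) / n := by
  obtain ⟨hone, hmem⟩ := cylReturn_spec hreturn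
  rw [lt_div_iff₀' (by positivity), Real.lt_log_iff_exp_lt (by positivity)]
  by_contra! hle
  exact hearly _ hone hle hmem

end ReturnRate

theorem partition_entropy_eq_mistake_cyl_return_rate_general {X : Type*} [MeasurableSpace X]
    {f : X → X} {m : ℕ} {P : X → Fin m} (hP : Measurable P) {g : ℕ → ℕ}
    (hgsub : Tendsto (fun n : ℕ => (g n : ℝ) / n) atTop (𝓝 0))
    {μ : Measure X} [IsProbabilityMeasure μ] (hμ : Ergodic f μ) :
    ∀ᵐ x ∂μ, Tendsto (fun n : ℕ => Real.log (cylReturn f P g n x) / n) atTop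
      (𝓝 (partitionEntropy μ f P)) := by
  have hreturn {c : ℝ} (hc : partitionEntropy μ f P < c) : ∀ᵐ x ∂μ, ∀ᶠ n : ℕ in atTop,
      ∃ k : ℕ, 1 ≤ k ∧ (k : ℝ) ≤ Real.exp (n * c) ∧ f^[k] x ∈ mistakeCylinder f P g n x := by
    filter_upwards [ae_eventually_exists_itinerary_return hμ hP hc] with x hx
    filter_upwards [hx] with n ⟨k, hk, hkc, heq⟩
    exact ⟨k, hk, hkc, mem_mistakeCylinder_of_itinerary_eq heq g⟩
  refine ae_tendsto_of_forall_ae_eventually (fun c hc => ?_) fun c hc => ?_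
  · filter_upwards [ae_eventually_forall_notMem_mistakeCylinder hμ hP hgsub hc,
      hreturn (lt_add_one _)] with x hearly hx
    filter_upwards [hearly, hx, eventually_gt_atTop 0] with n hn ⟨k, hk, _, hmem⟩ hn0
    exact lt_log_cylReturn_div hn0 ⟨k, hk, hmem⟩ hn
  · obtain ⟨b, hb, hbc⟩ := exists_between hc
    filter_upwards [hreturn hb] with x hx
    filter_upwards [hx, eventually_gt_atTop 0] with n ⟨k, hk, hkb, hmem⟩ hn0
    exact (log_cylReturn_div_le hn0 hk hkb hmem).trans_lt hbc

/-- Entropy relative to a partition equals the exponential growth rate of return times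
to mistake partition elements: for `μ`-a.e. `x`,
`h_μ(f,Q) = lim_n (1/n) log R_n(g, x, Q)`. -/
theorem partition_entropy_eq_mistake_cyl_return_rate {X : Type*} [MetricSpace X]
    [CompactSpace X] [MeasurableSpace X] [BorelSpace X] {f : X → X} (hf : Continuous f)
    {m : ℕ} {P : X → Fin m} (hP : Measurable P)
    {g : ℕ → ℕ} (hgmono : ∀ n, g n ≤ g (n + 1))
    (hgsub : Tendsto (fun n : ℕ => (g n : ℝ) / n) atTop (nhds 0))
    {μ : Measure X} [IsProbabilityMeasure μ] (hμ : Ergodic f μ) :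
    ∀ᵐ x ∂μ,
      Tendsto (fun n : ℕ => Real.log (cylReturn f P g n x) / n) atTop
        (nhds (partitionEntropy μ f P)) :=
  partition_entropy_eq_mistake_cyl_return_rate_general hP hgsub hμ
end

section
/- Let (X,f) be a topological dynamical system, μ an f-invariant ergodic Borel probability measure with h_μ(f) > 0, φ: X → ℝ a continuous potential, g a mistake function (for a finite partition Q), and Q a finite measurable partition such that lim_{n→∞} S_n(g;x,Q)/n = 1 for μ-a.e. x. Then for μ-almost every x, limsup_{n→∞} (1/n) log [ Σ_{j=0}^{S_n(g;x,Q)} e^{S_nφ(f^j(x))} ] ≤ c_{φ,1}, where c_{φ,1} = limsup_{n→∞} (1/n) log ∫ e^{S_nφ} dμ is the free energy and S_nφ = Σ_{i=0}^{n−1} φ∘fⁱ. -/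
open Filter MeasureTheory Set Topology
open scoped ENNReal

/-!
Weighting `e^{S_nφ} ∘ fʲ` by `1 / ((n + 1)² (j + 1)² ∫ e^{S_nφ} dμ)` gives, by invariance of `μ`,
a double series of functions with summable integrals. It therefore converges almost everywhere, so
along almost every orbit `e^{S_nφ(fʲ x)} ≤ K(x) (n + 1)² (j + 1)² ∫ e^{S_nφ} dμ` for all `n`, `j`.
Summing over `j ≤ τ` costs a further factor `τ + 1`, and all the polynomial factors disappear at
the exponential scale as soon as `log (τ + 1) = o(n)`, in particular when `τ` grows linearly.
-/

open Asymptotics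

section Asymptotics

lemma limsup_le_limsup_of_le_add_tendsto_zero {ι : Type*} {l : Filter ι} [l.NeBot]
    {u v e : ι → ℝ} (h : u ≤ᶠ[l] v + e) (he : Tendsto e l (𝓝 0))
    (hu : IsBoundedUnder (· ≥ ·) l u) (hv : IsBoundedUnder (· ≤ ·) l v) :
    limsup u l ≤ limsup v l := by
  have hv' : IsBoundedUnder (· ≥ ·) l v := by
    refine (isBoundedUnder_ge_add hu he.neg.isBoundedUnder_ge).mono_ge ?_
    filter_upwards [h] with i hi
    simpa [← sub_eq_add_neg] using hi
  calc limsup u l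
    _ ≤ limsup (v + e) l :=
      limsup_le_limsup h hu.isCoboundedUnder_le (isBoundedUnder_le_add hv he.isBoundedUnder_le)
    _ ≤ limsup v l + limsup e l :=
      limsup_add_le hv' hv he.isBoundedUnder_ge.isCoboundedUnder_le he.isBoundedUnder_le
    _ = limsup v l := by rw [he.limsup_eq, add_zero]

lemma isBigO_natCast_of_tendsto_div {u : ℕ → ℝ} {c : ℝ}
    (hu : Tendsto (fun n ↦ u n / n) atTop (𝓝 c)) : u =O[atTop] fun n ↦ (n : ℝ) := by
  refine isBigO_of_div_tendsto_nhds ?_ c hu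
  filter_upwards [eventually_ne_atTop 0] with n hn h
  exact absurd (Nat.cast_eq_zero.1 h) hn

lemma tendsto_log_natCast_add_one_div_of_isBigO {u : ℕ → ℕ}
    (hu : (fun n ↦ (u n : ℝ)) =O[atTop] fun n ↦ (n : ℝ)) :
    Tendsto (fun n ↦ Real.log (u n + 1) / n) atTop (𝓝 0) := by
  obtain ⟨c, hc, hcu⟩ := hu.exists_pos
  have htop : Tendsto (fun n : ℕ ↦ c * (n : ℝ) + 1) atTop atTop :=
    tendsto_atTop_add_const_right _ _ (tendsto_natCast_atTop_atTop.const_mul_atTop hc)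
  have hlin : (fun n : ℕ ↦ c * (n : ℝ) + 1) =O[atTop] fun n : ℕ ↦ (n : ℝ) :=
    ((isBigO_refl _ _).const_mul_left c).add
      (isLittleO_const_left.2 <| .inr <|
        tendsto_norm_atTop_atTop.comp tendsto_natCast_atTop_atTop).isBigO
  have hlog : (fun n ↦ Real.log (u n + 1)) =O[atTop] fun n : ℕ ↦ Real.log (c * n + 1) := by
    refine .of_norm_eventuallyLE ?_
    filter_upwards [hcu.bound] with n hn
    rw [Real.norm_of_nonneg (Real.log_nonneg (by simp))]
    gcongr
    simpa using hn
  exact (hlog.trans_isLittleO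
    ((Real.isLittleO_log_id_atTop.comp_tendsto htop).trans_isBigO hlin)).tendsto_div_nhds_zero

end Asymptotics

section BirkhoffSum

variable {X : Type*} {f : X → X}

lemma norm_birkhoffSum_le {E : Type*} [SeminormedAddCommGroup E] {φ : X → E} {C : ℝ}
    (hC : ∀ x, ‖φ x‖ ≤ C) (n : ℕ) (x : X) : ‖birkhoffSum f φ n x‖ ≤ n * C :=
  (norm_sum_le_of_le _ fun _ _ ↦ hC _).trans_eq (by simp)

lemma measurable_birkhoffSum [MeasurableSpace X] {M : Type*} [AddCommMonoid M]
    [MeasurableSpace M] [MeasurableAdd₂ M] {φ : X → M} (hf : Measurable f) (hφ : Measurable φ)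
    (n : ℕ) : Measurable (birkhoffSum f φ n) :=
  Finset.measurable_fun_sum _ fun i _ ↦ hφ.comp (hf.iterate i)

lemma le_log_birkhoffSum_exp {u : X → ℝ} {N : ℕ} (hN : N ≠ 0) (x : X) :
    u x ≤ Real.log (birkhoffSum f (fun y ↦ Real.exp (u y)) N x) := by
  refine (Real.le_log_iff_exp_le (Finset.sum_pos (fun _ _ ↦ Real.exp_pos _) (by simpa))).2 ?_
  exact Finset.single_le_sum (f := fun j ↦ Real.exp (u (f^[j] x)))
    (fun _ _ ↦ (Real.exp_pos _).le) (Finset.mem_range.2 hN.bot_lt)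

end BirkhoffSum

section OrbitBounds

variable {X : Type*} [MeasurableSpace X] {μ : Measure X}

lemma ae_summable_norm_of_summable_integral_norm {ι E : Type*} [Countable ι]
    [NormedAddCommGroup E] {F : ι → X → E} (hF : ∀ i, Integrable (F i) μ)
    (hsum : Summable fun i ↦ ∫ x, ‖F i x‖ ∂μ) :
    ∀ᵐ x ∂μ, Summable fun i ↦ ‖F i x‖ := by
  refine summable_norm_of_tsum_eLpNorm_ne_top le_rfl (fun i ↦ (hF i).1) ?_
  simpa only [eLpNorm_one_eq_lintegral_enorm, ← ofReal_integral_norm_eq_lintegral_enorm (hF _)]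
    using hsum.tsum_ofReal_ne_top

variable {f : X → X}

lemma integral_comp_iterate {E : Type*} [NormedAddCommGroup E] [NormedSpace ℝ E] {F : X → E}
    (hf : MeasurePreserving f μ μ) (hF : AEStronglyMeasurable F μ) (j : ℕ) :
    ∫ x, F (f^[j] x) ∂μ = ∫ x, F x ∂μ := by
  have hj := hf.iterate j
  rw [← integral_map hj.measurable.aemeasurable (by rwa [hj.map_eq]), hj.map_eq]

lemma summable_inv_sq_mul_inv_sq :
    Summable fun p : ℕ × ℕ ↦ (((p.1 : ℝ) + 1) ^ 2)⁻¹ * (((p.2 : ℝ) + 1) ^ 2)⁻¹ := by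
  have h : Summable fun n : ℕ ↦ (((n : ℝ) + 1) ^ 2)⁻¹ := by
    exact_mod_cast (summable_nat_add_iff 1).2 (Real.summable_nat_pow_inv.2 one_lt_two)
  exact h.mul_of_nonneg h (fun _ ↦ by positivity) (fun _ ↦ by positivity)

lemma ae_exists_norm_comp_iterate_le {E : Type*} [NormedAddCommGroup E]
    (hf : MeasurePreserving f μ μ) {F : ℕ → X → E} (hF : ∀ n, Integrable (F n) μ)
    (hpos : ∀ n, 0 < ∫ y, ‖F n y‖ ∂μ) :
    ∀ᵐ x ∂μ, ∃ K > 0, ∀ n j : ℕ,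
      ‖F n (f^[j] x)‖ ≤ K * (n + 1) ^ 2 * (j + 1) ^ 2 * ∫ y, ‖F n y‖ ∂μ := by
  set w : ℕ × ℕ → ℝ := fun p ↦ (p.1 + 1) ^ 2 * (p.2 + 1) ^ 2 * ∫ y, ‖F p.1 y‖ ∂μ with hw
  have hwpos (p) : 0 < w p := mul_pos (by positivity) (hpos p.1)
  have hint (p : ℕ × ℕ) : Integrable (fun x ↦ ‖F p.1 (f^[p.2] x)‖ / w p) μ :=
    ((hf.iterate p.2).integrable_comp_of_integrable (hF p.1)).norm.div_const _
  have hnorm (p : ℕ × ℕ) (x) :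
      ‖‖F p.1 (f^[p.2] x)‖ / w p‖ = ‖F p.1 (f^[p.2] x)‖ / w p :=
    Real.norm_of_nonneg (div_nonneg (norm_nonneg _) (hwpos p).le)
  have hintegral (p : ℕ × ℕ) : ∫ x, ‖‖F p.1 (f^[p.2] x)‖ / w p‖ ∂μ =
      (((p.1 : ℝ) + 1) ^ 2)⁻¹ * (((p.2 : ℝ) + 1) ^ 2)⁻¹ := by
    have hI := (hpos p.1).ne'
    simp only [hnorm, integral_div, integral_comp_iterate hf (hF p.1).norm.1]
    simp only [hw]
    field_simp
  filter_upwards [ae_summable_norm_of_summable_integral_norm hint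
    (by simpa only [hintegral] using summable_inv_sq_mul_inv_sq)] with x hx
  simp only [hnorm] at hx
  have hnonneg (p : ℕ × ℕ) : 0 ≤ ‖F p.1 (f^[p.2] x)‖ / w p := (norm_nonneg _).trans_eq (hnorm p x)
  refine ⟨(∑' p : ℕ × ℕ, ‖F p.1 (f^[p.2] x)‖ / w p) + 1,
    add_pos_of_nonneg_of_pos (tsum_nonneg hnonneg) one_pos, fun n j ↦ ?_⟩
  have hterm : ‖F n (f^[j] x)‖ / w (n, j) ≤ (∑' p : ℕ × ℕ, ‖F p.1 (f^[p.2] x)‖ / w p) + 1 :=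
    (hx.le_tsum (n, j) fun p _ ↦ hnonneg p).trans (le_add_of_nonneg_right zero_le_one)
  simpa only [hw, mul_assoc] using (div_le_iff₀ (hwpos _)).1 hterm

lemma ae_exists_norm_birkhoffSum_le {E : Type*} [NormedAddCommGroup E]
    (hf : MeasurePreserving f μ μ) {F : ℕ → X → E} (hF : ∀ n, Integrable (F n) μ)
    (hpos : ∀ n, 0 < ∫ y, ‖F n y‖ ∂μ) :
    ∀ᵐ x ∂μ, ∃ K > 0, ∀ n N : ℕ,
      ‖birkhoffSum f (F n) N x‖ ≤ K * (n + 1) ^ 2 * N ^ 3 * ∫ y, ‖F n y‖ ∂μ := by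
  filter_upwards [ae_exists_norm_comp_iterate_le hf hF hpos] with x ⟨K, hK, hKx⟩
  refine ⟨K, hK, fun n N ↦ ?_⟩
  have hterm : ∀ j ∈ Finset.range N,
      ‖F n (f^[j] x)‖ ≤ K * (n + 1) ^ 2 * N ^ 2 * ∫ y, ‖F n y‖ ∂μ := fun j hj ↦ by
    refine (hKx n j).trans ?_
    gcongr
    exact_mod_cast Finset.mem_range.1 hj
  calc ‖birkhoffSum f (F n) N x‖
    _ ≤ ∑ _j ∈ Finset.range N, K * (n + 1) ^ 2 * N ^ 2 * ∫ y, ‖F n y‖ ∂μ :=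
      norm_sum_le_of_le _ hterm
    _ = K * (n + 1) ^ 2 * N ^ 3 * ∫ y, ‖F n y‖ ∂μ := by
      rw [Finset.sum_const, Finset.card_range, nsmul_eq_mul]
      ring

lemma ae_exists_log_birkhoffSum_exp_le [NeZero μ] (hf : MeasurePreserving f μ μ)
    {u : ℕ → X → ℝ} (hu : ∀ n, Integrable (fun y ↦ Real.exp (u n y)) μ) :
    ∀ᵐ x ∂μ, ∃ K : ℝ, ∀ n N : ℕ,
      Real.log (birkhoffSum f (fun y ↦ Real.exp (u n y)) (N + 1) x) ≤
        Real.log (∫ y, Real.exp (u n y) ∂μ) +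
          (K + 2 * Real.log (n + 1) + 3 * Real.log (N + 1)) := by
  have hpos (n) : 0 < ∫ y, Real.exp (u n y) ∂μ := integral_exp_pos (hu n)
  filter_upwards [ae_exists_norm_birkhoffSum_le hf hu (by simpa using hpos)] with x ⟨K, hK, hKx⟩
  simp only [Real.norm_eq_abs, Real.abs_exp] at hKx
  refine ⟨Real.log K, fun n N ↦ ?_⟩
  have hsum_pos : 0 < birkhoffSum f (fun y ↦ Real.exp (u n y)) (N + 1) x :=
    Finset.sum_pos (fun _ _ ↦ Real.exp_pos _) (by simp)
  calc Real.log (birkhoffSum f (fun y ↦ Real.exp (u n y)) (N + 1) x)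
    _ ≤ Real.log (K * (n + 1) ^ 2 * (N + 1 : ℕ) ^ 3 * ∫ y, Real.exp (u n y) ∂μ) :=
      Real.log_le_log hsum_pos ((le_abs_self _).trans (hKx n (N + 1)))
    _ = Real.log (∫ y, Real.exp (u n y) ∂μ) +
          (Real.log K + 2 * Real.log (n + 1) + 3 * Real.log (N + 1)) := by
      rw [Real.log_mul (by positivity) (hpos n).ne', Real.log_mul (by positivity) (by positivity),
        Real.log_mul (by positivity) (by positivity), Real.log_pow, Real.log_pow]
      push_cast
      ring

end OrbitBounds

section FreeEnergy

variable {X : Type*} [MeasurableSpace X]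

/-- The free energy `c_{φ,1}` of `μ` with respect to the potential `φ`. The upper limit is taken
in `ℝ`, so it is meaningful only if the sequence is bounded, for instance if `φ` is. -/
noncomputable def freeEnergy (μ : Measure X) (f : X → X) (φ : X → ℝ) : ℝ :=
  limsup (fun n : ℕ ↦ Real.log (∫ y, Real.exp (birkhoffSum f φ n y) ∂μ) / n) atTop

variable {μ : Measure X} {f : X → X} {φ : X → ℝ} {C : ℝ}

lemma integrable_exp_of_le [IsFiniteMeasure μ] {u : X → ℝ} (hu : AEMeasurable u μ)
    (hC : ∀ x, u x ≤ C) : Integrable (fun x ↦ Real.exp (u x)) μ :=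
  .of_bound (C := Real.exp C) hu.exp.aestronglyMeasurable (.of_forall fun x ↦ by simpa using hC x)

lemma log_integral_exp_le [IsProbabilityMeasure μ] {u : X → ℝ}
    (hint : Integrable (fun x ↦ Real.exp (u x)) μ) (hC : ∀ x, u x ≤ C) :
    Real.log (∫ x, Real.exp (u x) ∂μ) ≤ C := by
  rw [Real.log_le_iff_le_exp (integral_exp_pos hint)]
  simpa using integral_mono hint (integrable_const _) fun x ↦ Real.exp_le_exp.2 (hC x)

theorem weighted_minimal_return_rate_le_general [IsProbabilityMeasure μ]
    (hf : MeasurePreserving f μ μ) (hφ : Measurable φ) (hC : ∀ x, |φ x| ≤ C) {τ : ℕ → X → ℕ}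
    (hτ : ∀ᵐ x ∂μ, Tendsto (fun n ↦ Real.log (τ n x + 1) / n) atTop (𝓝 0)) :
    ∀ᵐ x ∂μ,
      limsup (fun n : ℕ ↦ Real.log
        (birkhoffSum f (fun y ↦ Real.exp (birkhoffSum f φ n y)) (τ n x + 1) x) / n) atTop ≤
        freeEnergy μ f φ := by
  have hS (n x) : |birkhoffSum f φ n x| ≤ n * C := norm_birkhoffSum_le (E := ℝ) hC n x
  have hint (n) : Integrable (fun y ↦ Real.exp (birkhoffSum f φ n y)) μ :=
    integrable_exp_of_le (measurable_birkhoffSum hf.measurable hφ n).aemeasurable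
      fun x ↦ (abs_le.1 (hS n x)).2
  have habove : IsBoundedUnder (· ≤ ·) atTop
      fun n : ℕ ↦ Real.log (∫ y, Real.exp (birkhoffSum f φ n y) ∂μ) / n := by
    refine isBoundedUnder_of_eventually_le (a := C) ?_
    filter_upwards [eventually_gt_atTop 0] with n hn
    rw [div_le_iff₀' (by positivity)]
    exact log_integral_exp_le (hint n) fun y ↦ (abs_le.1 (hS n y)).2
  filter_upwards [hτ, ae_exists_log_birkhoffSum_exp_le hf hint] with x hτx ⟨K, hK⟩
  have herror : Tendsto (fun n : ℕ ↦
      (K + 2 * Real.log (n + 1) + 3 * Real.log (τ n x + 1)) / n) atTop (𝓝 0) := by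
    simpa only [add_div, mul_div_assoc, mul_zero, add_zero] using
      ((tendsto_const_div_atTop_nhds_zero_nat K).add
        ((tendsto_log_natCast_add_one_div_of_isBigO (isBigO_refl _ _)).const_mul 2)).add
          (hτx.const_mul 3)
  have hbelow : IsBoundedUnder (· ≥ ·) atTop fun n : ℕ ↦ Real.log
      (birkhoffSum f (fun y ↦ Real.exp (birkhoffSum f φ n y)) (τ n x + 1) x) / n := by
    refine isBoundedUnder_of_eventually_ge (a := -C) ?_
    filter_upwards [eventually_gt_atTop 0] with n hn
    rw [le_div_iff₀ (by positivity)]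
    linarith [le_log_birkhoffSum_exp (f := f) (u := birkhoffSum f φ n) (τ n x).succ_ne_zero x,
      (abs_le.1 (hS n x)).1]
  refine limsup_le_limsup_of_le_add_tendsto_zero (.of_forall fun n ↦ ?_) herror hbelow habove
  simpa only [Pi.add_apply, ← add_div] using
    div_le_div_of_nonneg_right (hK n (τ n x)) n.cast_nonneg

end FreeEnergy

/-- **Upper bound via the free energy (minimal return times).** For an ergodic `μ` with
positive entropy, a continuous potential `φ`, a finite measurable partition `Q` and a
mistake function `g` such that `S_n(g;x,Q)/n → 1` a.e., for `μ`-a.e. `x`: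
`limsup_n (1/n) log [Σ_{j=0}^{S_n(g;x,Q)} e^{S_nφ(f^j x)}] ≤ c_{φ,1}`,
where `c_{φ,1} = limsup_n (1/n) log ∫ e^{S_nφ} dμ`. -/
theorem weighted_minimal_return_rate_le {X : Type*} [MetricSpace X] [CompactSpace X]
    [MeasurableSpace X] [BorelSpace X] {f : X → X} (hf : Continuous f)
    {μ : Measure X} [IsProbabilityMeasure μ] (hμ : Ergodic f μ)
    (hpos : 0 < ksEntropy μ f)
    {φ : X → ℝ} (hφ : Continuous φ)
    {m : ℕ} {P : X → Fin m} (hP : Measurable P)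
    {g : ℕ → ℕ} (hgmono : ∀ n, g n ≤ g (n + 1))
    (hgsub : Tendsto (fun n : ℕ => (g n : ℝ) / n) atTop (nhds 0))
    (hlin : ∀ᵐ x ∂μ,
      Tendsto (fun n : ℕ => (cylMinReturn f P g n x : ℝ) / n) atTop (nhds 1)) :
    ∀ᵐ x ∂μ,
      limsup (fun n : ℕ =>
          Real.log (∑ j ∈ Finset.range (cylMinReturn f P g n x + 1),
            Real.exp (∑ i ∈ Finset.range n, φ (f^[i] (f^[j] x)))) / n) atTop ≤
        limsup (fun n : ℕ =>
          Real.log (∫ y, Real.exp (∑ i ∈ Finset.range n, φ (f^[i] y)) ∂μ) / n)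
          atTop := by
  obtain ⟨C, hC⟩ := (isCompact_range hφ).isBounded.exists_norm_le
  exact weighted_minimal_return_rate_le_general hμ.toMeasurePreserving hφ.measurable
    (fun x ↦ hC _ (mem_range_self x))
    (hlin.mono fun _ hx ↦
      tendsto_log_natCast_add_one_div_of_isBigO (isBigO_natCast_of_tendsto_div hx))
end

section
/- Let (X,f) be a topological dynamical system, g a mistake function, and φ: X → ℝ a continuous potential. For every δ > 0 there exists ε_δ > 0 such that for every 0 < ε < ε_δ, every x ∈ X and every n ≥ 1, Σ_{i=0}^{n−1}(φ(fⁱx) − δ) − C·g(n,ε) ≤ S_nφ(B_n(g;x,ε)) ≤ Σ_{i=0}^{n−1}(φ(fⁱx) + δ) + C·g(n,ε), where C = 2(‖φ‖_∞ + δ) and S_nφ(B_n(g;x,ε)) = sup{ Σ_{i=0}^{n−1} φ(fⁱy) : y ∈ B_n(g;x,ε) }. -/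
open Filter MeasureTheory Set Topology
open scoped ENNReal

/-- `S_nφ(B_n(g;x,ε)) = sup { Σ_{i<n} φ(fⁱy) : y ∈ B_n(g;x,ε) }`. -/
noncomputable def birkhoffSupOnMistakeBall {X : Type*} [PseudoMetricSpace X]
    (f : X → X) (φ : X → ℝ) (g : ℕ → ℝ → ℕ) (n : ℕ) (x : X) (ε : ℝ) : ℝ :=
  sSup ((fun y => ∑ i ∈ Finset.range n, φ (f^[i] y)) '' mistakeBall f g n x ε)

/-!
A point of the mistake ball follows the orbit of `x` within `ε` except at no more than `g n ε`
times. At the good times uniform continuity makes the two terms of the Birkhoff sums differ by at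
most `δ`; at each mistake they differ by at most `2‖φ‖_∞`. This gives the upper bound for the
supremum, and the lower bound holds because `x` lies in its own mistake ball.
-/

theorem sum_le_sum_add_card_sdiff_nsmul {ι M : Type*} [DecidableEq ι] [AddCommMonoid M]
    [PartialOrder M] [IsOrderedAddMonoid M] {s t : Finset ι} {u v : ι → M} {C : M}
    (hst : s ⊆ t) (hs : ∀ i ∈ s, u i ≤ v i) (ht : ∀ i ∈ t \ s, u i ≤ v i + C) :
    ∑ i ∈ t, u i ≤ ∑ i ∈ t, v i + (t \ s).card • C :=
  calc
    ∑ i ∈ t, u i = ∑ i ∈ t \ s, u i + ∑ i ∈ s, u i := (Finset.sum_sdiff hst).symm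
    _ ≤ ∑ i ∈ t \ s, (v i + C) + ∑ i ∈ s, v i :=
      add_le_add (Finset.sum_le_sum ht) (Finset.sum_le_sum hs)
    _ = ∑ i ∈ t, v i + (t \ s).card • C := by
      rw [Finset.sum_add_distrib, Finset.sum_const, add_right_comm, Finset.sum_sdiff hst]

theorem le_add_two_mul_iSup_abs {ι : Type*} {u : ι → ℝ} (hu : BddAbove (range fun i => |u i|))
    (i j : ι) : u i ≤ u j + 2 * ⨆ k, |u k| := by
  have hi : u i ≤ ⨆ k, |u k| := (le_abs_self _).trans (le_ciSup hu i)
  have hj : -u j ≤ ⨆ k, |u k| := (neg_le_abs _).trans (le_ciSup hu j)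
  linarith

section MistakeBall

variable {X : Type*} [PseudoMetricSpace X] {f : X → X} {g : ℕ → ℝ → ℕ} {φ : X → ℝ} {n : ℕ}
  {x y : X} {ε : ℝ}

theorem mem_mistakeBall_self (hε : 0 < ε) : x ∈ mistakeBall f g n x ε :=
  ⟨Finset.range n, subset_rfl, by simp, fun i _ => by simpa using hε⟩

theorem exists_card_sdiff_le_of_mem_mistakeBall (hy : y ∈ mistakeBall f g n x ε) :
    ∃ Λ ⊆ Finset.range n, (Finset.range n \ Λ).card ≤ g n ε ∧
      ∀ i ∈ Λ, dist (f^[i] y) (f^[i] x) < ε := by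
  obtain ⟨Λ, hΛ, hcard, hdist⟩ := hy
  refine ⟨Λ, hΛ, ?_, hdist⟩
  rw [Finset.card_sdiff_of_subset hΛ, Finset.card_range]
  omega

theorem sum_iterate_le_of_mem_mistakeBall {δ C : ℝ} (hC : 0 ≤ C)
    (hnear : ∀ a b, dist a b < ε → φ a ≤ φ b + δ) (hfar : ∀ a b, φ a ≤ φ b + δ + C)
    (hy : y ∈ mistakeBall f g n x ε) :
    ∑ i ∈ Finset.range n, φ (f^[i] y) ≤
      ∑ i ∈ Finset.range n, (φ (f^[i] x) + δ) + C * g n ε := by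
  obtain ⟨Λ, hΛ, hcard, hdist⟩ := exists_card_sdiff_le_of_mem_mistakeBall hy
  calc
    ∑ i ∈ Finset.range n, φ (f^[i] y)
        ≤ ∑ i ∈ Finset.range n, (φ (f^[i] x) + δ) + (Finset.range n \ Λ).card • C :=
      sum_le_sum_add_card_sdiff_nsmul hΛ (fun i hi => hnear _ _ (hdist i hi))
        fun _ _ => hfar _ _
    _ ≤ ∑ i ∈ Finset.range n, (φ (f^[i] x) + δ) + C * g n ε := by
      rw [nsmul_eq_mul, mul_comm]
      gcongr

theorem birkhoffSupOnMistakeBall_le {B : ℝ} (hε : 0 < ε)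
    (hB : ∀ y ∈ mistakeBall f g n x ε, ∑ i ∈ Finset.range n, φ (f^[i] y) ≤ B) :
    birkhoffSupOnMistakeBall f φ g n x ε ≤ B :=
  csSup_le (Set.Nonempty.image _ ⟨x, mem_mistakeBall_self hε⟩) (forall_mem_image.2 hB)

theorem sum_iterate_le_birkhoffSupOnMistakeBall
    (hbdd : BddAbove ((fun z => ∑ i ∈ Finset.range n, φ (f^[i] z)) '' mistakeBall f g n x ε))
    (hy : y ∈ mistakeBall f g n x ε) :
    ∑ i ∈ Finset.range n, φ (f^[i] y) ≤ birkhoffSupOnMistakeBall f φ g n x ε :=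
  le_csSup hbdd (mem_image_of_mem _ hy)

end MistakeBall

theorem birkhoffSupOnMistakeBall_estimate_general {X : Type*} [PseudoMetricSpace X] (f : X → X)
    (g : ℕ → ℝ → ℕ) {φ : X → ℝ} (hφ : UniformContinuous φ)
    (hbdd : BddAbove (range fun y => |φ y|)) {δ : ℝ} (hδ : 0 < δ) :
    ∃ εδ : ℝ, 0 < εδ ∧ ∀ ε : ℝ, 0 < ε → ε < εδ → ∀ (x : X) (n : ℕ),
      (∑ i ∈ Finset.range n, (φ (f^[i] x) - δ)) -
          2 * ((⨆ y : X, |φ y|) + δ) * g n ε ≤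
        birkhoffSupOnMistakeBall f φ g n x ε ∧
      birkhoffSupOnMistakeBall f φ g n x ε ≤
        (∑ i ∈ Finset.range n, (φ (f^[i] x) + δ)) +
          2 * ((⨆ y : X, |φ y|) + δ) * g n ε := by
  obtain ⟨εδ, hεδ, hclose⟩ := Metric.uniformContinuous_iff.1 hφ δ hδ
  refine ⟨εδ, hεδ, fun ε hε hlt x n => ?_⟩
  have hC : 0 ≤ 2 * ((⨆ y, |φ y|) + δ) := by
    have := Real.iSup_nonneg fun y => abs_nonneg (φ y)
    positivity
  have hnear (a b : X) (hab : dist a b < ε) : φ a ≤ φ b + δ := by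
    have := (le_abs_self _).trans_lt (hclose (hab.trans hlt))
    linarith
  have hfar (a b : X) : φ a ≤ φ b + δ + 2 * ((⨆ y, |φ y|) + δ) := by
    linarith [le_add_two_mul_iSup_abs hbdd a b]
  have hupper := fun y (hy : y ∈ mistakeBall f g n x ε) =>
    sum_iterate_le_of_mem_mistakeBall hC hnear hfar hy
  refine ⟨?_, birkhoffSupOnMistakeBall_le hε hupper⟩
  calc
    (∑ i ∈ Finset.range n, (φ (f^[i] x) - δ)) - 2 * ((⨆ y, |φ y|) + δ) * g n ε
        ≤ ∑ i ∈ Finset.range n, (φ (f^[i] x) - δ) := sub_le_self _ (by positivity)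
    _ ≤ ∑ i ∈ Finset.range n, φ (f^[i] x) :=
      Finset.sum_le_sum fun _ _ => sub_le_self _ hδ.le
    _ ≤ birkhoffSupOnMistakeBall f φ g n x ε :=
      sum_iterate_le_birkhoffSupOnMistakeBall ⟨_, forall_mem_image.2 hupper⟩
        (mem_mistakeBall_self hε)

/-- **Continuity estimate for Birkhoff sums over mistake balls.** For every `δ > 0`
there exists `ε_δ > 0` such that for all `0 < ε < ε_δ`, all `x` and all `n ≥ 1`:
`Σ_{i<n}(φ(fⁱx) − δ) − C g(n,ε) ≤ S_nφ(B_n(g;x,ε)) ≤ Σ_{i<n}(φ(fⁱx) + δ) + C g(n,ε)`,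
where `C = 2(‖φ‖_∞ + δ)`. -/
theorem birkhoffSupOnMistakeBall_estimate {X : Type*} [MetricSpace X] [CompactSpace X]
    [Nonempty X] {f : X → X} (hf : Continuous f)
    {g : ℕ → ℝ → ℕ} (hg : IsMistakeFunction g)
    {φ : X → ℝ} (hφ : Continuous φ) {δ : ℝ} (hδ : 0 < δ) :
    ∃ εδ : ℝ, 0 < εδ ∧ ∀ ε : ℝ, 0 < ε → ε < εδ → ∀ x : X, ∀ n : ℕ, 1 ≤ n →
      (∑ i ∈ Finset.range n, (φ (f^[i] x) - δ)) -
          2 * ((⨆ y : X, |φ y|) + δ) * g n ε ≤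
        birkhoffSupOnMistakeBall f φ g n x ε ∧
      birkhoffSupOnMistakeBall f φ g n x ε ≤
        (∑ i ∈ Finset.range n, (φ (f^[i] x) + δ)) +
          2 * ((⨆ y : X, |φ y|) + δ) * g n ε := by
  obtain ⟨εδ, hεδ, h⟩ := birkhoffSupOnMistakeBall_estimate_general f g
    (CompactSpace.uniformContinuous_of_continuous hφ) (isCompact_range hφ.abs).bddAbove hδ
  exact ⟨εδ, hεδ, fun ε hε hlt x n _ => h ε hε hlt x n⟩
end
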